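/- Let d ≥ 3 and let D ⊂ ℝ^d be a bounded domain with C² boundary and connected boundary, with ε ∈ (0,1) as in the tangential comparison lemma, N := closure(N_ε(∂D)) ∩ D, and c > 0 a constant. Define the Finsler metric F(x,v) = ‖v_N‖/(2δ_D(x)) + ‖v_T‖/δ_D(x)^{1/2} for x ∈ N, and F(x,v) = c‖v‖ for x ∈ D∖N, and let d_F be the associated intrinsic distance (infimum of ∫₀¹ F(γ(t),γ̇(t))dt over piecewise C¹ curves in D joining the two points). Then there exists B ≥ 0 such that for all x, y ∈ D: d_H(x,y) − B ≤ d_F(x,y) ≤ d_H(x,y) + B. -/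

import Mathlib

/-!
The boundary is compact, connected and locally a bi-Lipschitz image of a convex set, so two of its
points at Euclidean distance `r` are joined inside it by a curve of length at most `C * r`. Since
`‖x - π x‖ = h(x)²` is at most a constant times `h(x)`, up to bounded additive error one may replace
`H(π x, π y)` in `d_H(x, y)` by `‖π x - π y‖` or by `‖x - y‖`.

*Lower bound.* Along a curve `γ` starting or ending at `z`, the potential
`2 log (‖γ - z‖ / K + w(δ)) - log w(δ)`, with `δ` the boundary distance truncated at `min ε 1`,
varies by at most the `F`-length of `γ`. Here `w(δ) = √δ exp (-√δ / 2)` is a height comparable with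
`√δ` whose logarithm varies slightly more slowly than `log √δ`; the slack pays for the change of
`‖γ - z‖` caused by the normal component of the velocity, and a large `K` makes the tangential
component affordable. The derivative of `δ` along `γ` is the normal component of the velocity
because `‖γ - π (γ t)‖` lies above `δ(γ)` and touches it at time `t`.

*Upper bound.* Interior tangent balls of a uniform radius `R` make `p - s • n p` a point of `D` at
distance `s` from the boundary whose projection is `p`. From `x` one climbs along the normal to the
height `r = max (h x) (h y) ‖π x - π y‖`, moves parallel to the boundary at bounded cost, and
descends to `y`. If `r > √R`, one climbs only to `√R` and moves inside the compact set of points at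
distance at least `R` from the boundary, where the cost of joining two points is bounded.
-/

open scoped RealInnerProductSpace ENNReal
open Metric Set Filter

noncomputable section

/-- Euclidean space `ℝ^d`. -/
abbrev Euc (d : ℕ) := EuclideanSpace ℝ (Fin d)

/-- The open unit disk in `ℝ²`. -/
def unitDisk : Set (Euc 2) := Metric.ball 0 1

/-- Partial derivative of `f` at `z` in the `i`-th coordinate direction. -/
def pd {d : ℕ} (i : Fin 2) (f : Euc 2 → Euc d) (z : Euc 2) : Euc d :=
  fderiv ℝ f z (EuclideanSpace.single i 1)

/-- `f` is a conformal harmonic map on the unit disk: it is `C²`, its (vector)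
Laplacian vanishes (equivalently, every component is harmonic), and at each point
its two partial derivatives are orthogonal and of equal norm. -/
def ConformalHarmonicOnDisk {d : ℕ} (f : Euc 2 → Euc d) : Prop :=
  ContDiffOn ℝ 2 f unitDisk ∧
  (∀ z ∈ unitDisk,
    fderiv ℝ (pd 0 f) z (EuclideanSpace.single 0 1)
      + fderiv ℝ (pd 1 f) z (EuclideanSpace.single 1 1) = 0) ∧
  (∀ z ∈ unitDisk, ‖pd 0 f z‖ = ‖pd 1 f z‖ ∧ ⟪pd 0 f z, pd 1 f z⟫ = 0)

/-- The minimal (Forstnerič–Kalaj) metric of a domain `D ⊆ ℝ^d`: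
`g_D(x,v) = inf {1/r : r > 0, f ∈ CH(𝔻, D), f 0 = x, f_x 0 = r • v}`. -/
def minMetric {d : ℕ} (D : Set (Euc d)) (x v : Euc d) : ℝ :=
  sInf {c : ℝ | ∃ r : ℝ, 0 < r ∧ c = 1 / r ∧
    ∃ f : Euc 2 → Euc d, ConformalHarmonicOnDisk f ∧ (∀ z ∈ unitDisk, f z ∈ D) ∧
      f 0 = x ∧ pd 0 f 0 = r • v}

/-- `γ` is a piecewise `C¹` curve on `[a, b]`. -/
def PiecewiseC1On {d : ℕ} (γ : ℝ → Euc d) (a b : ℝ) : Prop :=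
  ContinuousOn γ (Set.Icc a b) ∧
  ∃ (n : ℕ) (t : Fin (n + 2) → ℝ), Monotone t ∧ t 0 = a ∧ t (Fin.last (n + 1)) = b ∧
    ∀ i : Fin (n + 1), ContDiffOn ℝ 1 γ (Set.Icc (t i.castSucc) (t i.succ))

/-- The minimal pseudodistance `ρ_D`: infimum of minimal lengths of piecewise `C¹`
curves in `D` joining `x` to `y`. -/
def minDist {d : ℕ} (D : Set (Euc d)) (x y : Euc d) : ℝ :=
  sInf {L : ℝ | ∃ γ : ℝ → Euc d, PiecewiseC1On γ 0 1 ∧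
    (∀ t ∈ Set.Icc (0:ℝ) 1, γ t ∈ D) ∧ γ 0 = x ∧ γ 1 = y ∧
    L = ∫ t in (0:ℝ)..(1:ℝ), minMetric D (γ t) (deriv γ t)}

/-- The Gromov product `(x|y)_o` with respect to the minimal pseudodistance of `D`. -/
def gromovProd {d : ℕ} (D : Set (Euc d)) (o x y : Euc d) : ℝ :=
  (minDist D x o + minDist D y o - minDist D x y) / 2

/-- `D` is hyperbolic: the minimal pseudodistance is a genuine distance. -/
def MinHyperbolic {d : ℕ} (D : Set (Euc d)) : Prop :=
  ∀ x ∈ D, ∀ y ∈ D, x ≠ y → 0 < minDist D x y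

/-- The Hessian quadratic form of `u` at `x` in direction `v`. -/
def hessQ {d : ℕ} (u : Euc d → ℝ) (x v : Euc d) : ℝ :=
  fderiv ℝ (fun y => fderiv ℝ u y v) x v

/-- `D` is a bounded domain with `C²` boundary, described by a `C²` defining
function `u` on a neighborhood `U` of `∂D` with nonvanishing differential. -/
def IsC2BoundedDomain {d : ℕ} (D : Set (Euc d)) : Prop :=
  IsOpen D ∧ IsConnected D ∧ Bornology.IsBounded D ∧
  ∃ (U : Set (Euc d)) (u : Euc d → ℝ), IsOpen U ∧ frontier D ⊆ U ∧ ContDiffOn ℝ 2 u U ∧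
    D ∩ U = {x | x ∈ U ∧ u x < 0} ∧ frontier D = {x | x ∈ U ∧ u x = 0} ∧
    ∀ x ∈ frontier D, fderiv ℝ u x ≠ 0

/-- `D` is a bounded strongly minimally convex domain: it has a `C²` defining function
which is strongly minimally plurisubharmonic near `∂D`, i.e. the trace of its Hessian
on every 2-plane (spanned by an orthonormal pair `v, w`) is strictly positive. -/
def IsStronglyMinimallyConvex {d : ℕ} (D : Set (Euc d)) : Prop :=
  IsOpen D ∧ IsConnected D ∧ Bornology.IsBounded D ∧
  ∃ (U : Set (Euc d)) (u : Euc d → ℝ), IsOpen U ∧ frontier D ⊆ U ∧ ContDiffOn ℝ 2 u U ∧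
    D ∩ U = {x | x ∈ U ∧ u x < 0} ∧ frontier D = {x | x ∈ U ∧ u x = 0} ∧
    (∀ x ∈ frontier D, fderiv ℝ u x ≠ 0) ∧
    (∀ x ∈ U, ∀ v w : Euc d, ‖v‖ = 1 → ‖w‖ = 1 → ⟪v, w⟫ = 0 →
      0 < hessQ u x v + hessQ u x w)

/-- `D` is a bounded strongly convex domain: convex, with a `C²` defining function whose
Hessian is positive definite on the tangent space at every boundary point
(equivalently, all principal curvatures of `∂D` w.r.t. the inner normal are positive). -/
def IsStronglyConvexDomain {d : ℕ} (D : Set (Euc d)) : Prop :=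
  IsOpen D ∧ IsConnected D ∧ Bornology.IsBounded D ∧ Convex ℝ D ∧
  ∃ (U : Set (Euc d)) (u : Euc d → ℝ), IsOpen U ∧ frontier D ⊆ U ∧ ContDiffOn ℝ 2 u U ∧
    D ∩ U = {x | x ∈ U ∧ u x < 0} ∧ frontier D = {x | x ∈ U ∧ u x = 0} ∧
    (∀ x ∈ frontier D, fderiv ℝ u x ≠ 0) ∧
    (∀ ξ ∈ frontier D, ∀ w : Euc d, w ≠ 0 → fderiv ℝ u ξ w = 0 → 0 < hessQ u ξ w)

/-- For `x ∈ D` with nearest boundary point `p`, the outer unit normal direction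
`n_{π(x)} = (p - x)/‖p - x‖`. -/
def nvec {d : ℕ} (x p : Euc d) : Euc d := ‖p - x‖⁻¹ • (p - x)

/-- Normal component of `v` at `x` with nearest boundary point `p`. -/
def vN {d : ℕ} (x p v : Euc d) : Euc d := ⟪v, nvec x p⟫ • nvec x p

/-- Tangential component of `v` at `x` with nearest boundary point `p`. -/
def vT {d : ℕ} (x p v : Euc d) : Euc d := v - vN x p v

/-- The intrinsic distance `H` on the boundary `∂D`: infimum of Euclidean lengths of
piecewise `C¹` curves in `∂D` joining two boundary points. -/
def bdist {d : ℕ} (D : Set (Euc d)) (ξ η : Euc d) : ℝ :=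
  sInf {L : ℝ | ∃ α : ℝ → Euc d, PiecewiseC1On α 0 1 ∧
    (∀ t ∈ Set.Icc (0:ℝ) 1, α t ∈ frontier D) ∧ α 0 = ξ ∧ α 1 = η ∧
    L = ∫ t in (0:ℝ)..(1:ℝ), ‖deriv α t‖}

/-- `h(x) = δ_D(x)^{1/2}`. -/
def hfun {d : ℕ} (D : Set (Euc d)) (x : Euc d) : ℝ :=
  Real.sqrt (Metric.infDist x (frontier D))

/-- The length of a curve with respect to the boundary Finsler metric
`F(x,v) = ‖v_N‖/(2 δ_D(x)) + ‖v_T‖/δ_D(x)^{1/2}`. -/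
def Flen {d : ℕ} (D : Set (Euc d)) (π : Euc d → Euc d) (γ : ℝ → Euc d) : ℝ :=
  ∫ t in (0:ℝ)..(1:ℝ),
    (‖vN (γ t) (π (γ t)) (deriv γ t)‖ / (2 * Metric.infDist (γ t) (frontier D))
      + ‖vT (γ t) (π (γ t)) (deriv γ t)‖ / Real.sqrt (Metric.infDist (γ t) (frontier D)))

/-- The filling Finsler metric `F`: the boundary Finsler metric on
`N = {δ_D ≤ ε}` and `c‖v‖` elsewhere. -/
def Fmet {d : ℕ} (D : Set (Euc d)) (π : Euc d → Euc d) (ε c : ℝ) (x v : Euc d) : ℝ :=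
  if Metric.infDist x (frontier D) ≤ ε then
    ‖vN x (π x) v‖ / (2 * Metric.infDist x (frontier D))
      + ‖vT x (π x) v‖ / Real.sqrt (Metric.infDist x (frontier D))
  else c * ‖v‖

/-- The intrinsic distance `d_F` associated to the filling Finsler metric `F`. -/
def dF {d : ℕ} (D : Set (Euc d)) (π : Euc d → Euc d) (ε c : ℝ) (x y : Euc d) : ℝ :=
  sInf {L : ℝ | ∃ γ : ℝ → Euc d, PiecewiseC1On γ 0 1 ∧
    (∀ t ∈ Set.Icc (0:ℝ) 1, γ t ∈ D) ∧ γ 0 = x ∧ γ 1 = y ∧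
    L = ∫ t in (0:ℝ)..(1:ℝ), Fmet D π ε c (γ t) (deriv γ t)}

/-- The hyperbolic filling distance
`d_H(x,y) = 2 log((H(π x, π y) + h(x) ∨ h(y)) / √(h(x) h(y)))`. -/
def dH {d : ℕ} (D : Set (Euc d)) (π : Euc d → Euc d) (x y : Euc d) : ℝ :=
  2 * Real.log ((bdist D (π x) (π y) + max (hfun D x) (hfun D y)) /
    Real.sqrt (hfun D x * hfun D y))

/-- `δ̂_D(x,v)`: the supremum over 2-dimensional linear subspaces `Λ ∋ v` of the
distance (in `ℝ≥0∞`, so `∞` if `x + Λ ⊆ D`) from `x` to `(x + Λ) \ D`. -/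
def deltaHat {d : ℕ} (D : Set (Euc d)) (x v : Euc d) : ℝ≥0∞ :=
  ⨆ (Λ : Submodule ℝ (Euc d)) (_ : Module.finrank ℝ Λ = 2) (_ : v ∈ Λ),
    ⨅ (y : Euc d) (_ : y - x ∈ Λ ∧ y ∉ D), edist x y

/-- The positive parameter at which the ray `t ↦ x + t • v` exits the convex domain `D`
(equal to `0`, by the `sInf ∅ = 0` convention, when the ray stays in `D`,
i.e. when the corresponding chord endpoint is the point at infinity). -/
def chordParam {d : ℕ} (D : Set (Euc d)) (x v : Euc d) : ℝ :=
  sInf {s : ℝ | 0 < s ∧ x + s • v ∉ D}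

/-- The Hilbert Finsler metric `h_D(x,v) = (‖v‖/2)(1/‖x-a‖ + 1/‖x-b‖)` of a convex
domain, with the convention `1/‖x-∞‖ = 0` (here `‖x-b‖ = chordParam D x v • ‖v‖` and
`‖x-a‖ = chordParam D x (-v) • ‖v‖`, and division by zero is zero). -/
def hilbertFinsler {d : ℕ} (D : Set (Euc d)) (x v : Euc d) : ℝ :=
  (1/2) * (1 / chordParam D x v + 1 / chordParam D x (-v))

/- The Hilbert distance of a convex domain: for `x ≠ y`,
`H_D(x,y) = ½ log((‖x-b‖ ‖y-a‖)/(‖x-a‖ ‖y-b‖))` where `a, x, y, b` are aligned on the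
chord through `x, y`, with the convention that ratios involving the point at infinity
(detected by `chordParam = 0`) are equal to `1`. -/
open Classical in
def hilbertDist {d : ℕ} (D : Set (Euc d)) (x y : Euc d) : ℝ :=
  if x = y then 0 else
    (1/2) * Real.log
      ((if chordParam D x (y - x) = 0 then 1
        else chordParam D x (y - x) / (chordParam D x (y - x) - 1)) *
       (if chordParam D x (x - y) = 0 then 1
        else (1 + chordParam D x (x - y)) / chordParam D x (x - y)))

section

open scoped Topology NNReal
open MeasureTheory

/-! ### Piecewise `C¹` curves -/

section

variable {d : ℕ} {γ η : ℝ → Euc d} {a b c : ℝ}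

/-- The definition indexes the subdivision by `Fin (n + 2)`; sequences are easier to concatenate. -/
lemma piecewiseC1On_iff :
    PiecewiseC1On γ a b ↔ ContinuousOn γ (Icc a b) ∧
      ∃ (n : ℕ) (t : ℕ → ℝ), Monotone t ∧ t 0 = a ∧ t n = b ∧
        ∀ i < n, ContDiffOn ℝ 1 γ (Icc (t i) (t (i + 1))) := by
  constructor
  · rintro ⟨hc, n, t, ht, h0, h1, h⟩
    refine ⟨hc, n + 1, fun i => t ⟨min i (n + 1), by omega⟩, fun i j hij => ht ?_,
      by simpa using h0, ?_, fun i hi => ?_⟩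
    · simp only [Fin.mk_le_mk]
      omega
    · simp only [min_self]
      exact h1
    · have hi₀ : min i (n + 1) = i := by omega
      have hi₁ : min (i + 1) (n + 1) = i + 1 := by omega
      simpa [hi₀, hi₁, Fin.castSucc, Fin.castAdd, Fin.castLE, Fin.succ] using h ⟨i, hi⟩
  · rintro ⟨hc, n, t, ht, h0, h1, h⟩
    -- one stationary piece is appended, since the definition asks for at least one piece
    refine ⟨hc, n, fun i => t (min i n), fun i j hij => ht ?_, by simpa using h0, by simpa using h1,
      fun i => ?_⟩
    · have : (i : ℕ) ≤ j := hij
      omega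
    · rcases Nat.lt_or_ge i n with hi | hi
      · have hi₀ : min (i : ℕ) n = i := by omega
        have hi₁ : min ((i : ℕ) + 1) n = i + 1 := by omega
        simpa [hi₀, hi₁] using h i hi
      · have hi₀ : min (i : ℕ) n = n := by omega
        have hi₁ : min ((i : ℕ) + 1) n = n := by omega
        simp only [Fin.val_castSucc, Fin.val_succ, hi₀, hi₁, Icc_self]
        rintro x rfl
        exact contDiffWithinAt_singleton

lemma Icc_succ_subset_of_monotone {t : ℕ → ℝ} {n i : ℕ} (ht : Monotone t) (hi : i < n) :
    Icc (t i) (t (i + 1)) ⊆ Icc (t 0) (t n) :=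
  Icc_subset_Icc (ht (Nat.zero_le i)) (ht hi)

lemma lipschitzOnWith_Icc_trans {α : Type*} [PseudoMetricSpace α] {f : ℝ → α} {K : ℝ≥0}
    (h : LipschitzOnWith K f (Icc a b)) (h' : LipschitzOnWith K f (Icc b c))
    (hab : a ≤ b) (hbc : b ≤ c) : LipschitzOnWith K f (Icc a c) := by
  have of_le : ∀ x ∈ Icc a c, ∀ y ∈ Icc a c, x ≤ y → dist (f x) (f y) ≤ K * dist x y := by
    intro x hx y hy hxy
    rcases le_total y b with hyb | hby
    · exact h.dist_le_mul x ⟨hx.1, hxy.trans hyb⟩ y ⟨hy.1, hyb⟩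
    rcases le_total b x with hbx | hxb
    · exact h'.dist_le_mul x ⟨hbx, hx.2⟩ y ⟨hby, hy.2⟩
    calc dist (f x) (f y) ≤ dist (f x) (f b) + dist (f b) (f y) := dist_triangle _ _ _
      _ ≤ K * dist x b + K * dist b y :=
        add_le_add (h.dist_le_mul x ⟨hx.1, hxb⟩ b ⟨hab, le_rfl⟩)
          (h'.dist_le_mul b ⟨le_rfl, hbc⟩ y ⟨hby, hy.2⟩)
      _ = K * dist x y := by
        rw [Real.dist_eq, Real.dist_eq, Real.dist_eq, abs_of_nonpos (sub_nonpos.2 hxb),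
          abs_of_nonpos (sub_nonpos.2 hby), abs_of_nonpos (sub_nonpos.2 hxy)]
        ring
  refine LipschitzOnWith.of_dist_le_mul fun x hx y hy => ?_
  rcases le_total x y with hxy | hyx
  · exact of_le x hx y hy hxy
  · rw [dist_comm, dist_comm x y]
    exact of_le y hy x hx hyx

namespace PiecewiseC1On

lemma congr (h : PiecewiseC1On γ a b) (he : EqOn η γ (Icc a b)) : PiecewiseC1On η a b := by
  rw [piecewiseC1On_iff] at h ⊢
  obtain ⟨hc, n, t, ht, rfl, rfl, h⟩ := h
  exact ⟨hc.congr he, n, t, ht, rfl, rfl, fun i hi =>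
    (h i hi).congr (he.mono (Icc_succ_subset_of_monotone ht hi))⟩

lemma comp_contDiffOn {f : Euc d → Euc d} {W : Set (Euc d)} (h : PiecewiseC1On γ a b)
    (hf : ContDiffOn ℝ 1 f W) (hm : MapsTo γ (Icc a b) W) :
    PiecewiseC1On (fun t => f (γ t)) a b := by
  rw [piecewiseC1On_iff] at h ⊢
  obtain ⟨hc, n, t, ht, rfl, rfl, h⟩ := h
  exact ⟨hf.continuousOn.comp hc hm, n, t, ht, rfl, rfl, fun i hi =>
    hf.comp (h i hi) (hm.mono_left (Icc_succ_subset_of_monotone ht hi))⟩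

lemma comp_affine {p q : ℝ} (ha : 0 < a) (h : PiecewiseC1On γ (a * p + b) (a * q + b)) :
    PiecewiseC1On (fun t => γ (a * t + b)) p q := by
  rw [piecewiseC1On_iff] at h ⊢
  obtain ⟨hc, n, t, ht, h0, h1, h⟩ := h
  refine ⟨hc.comp (by fun_prop) fun x hx => ⟨?_, ?_⟩, n, fun i => (t i - b) / a, fun i j hij => ?_,
    (div_eq_iff ha.ne').2 (by linarith), (div_eq_iff ha.ne').2 (by linarith),
    fun i hi => (h i hi).comp (by fun_prop) fun x hx => ⟨?_, ?_⟩⟩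
  · nlinarith [hx.1]
  · nlinarith [hx.2]
  · have := ht hij
    dsimp only
    gcongr
  · linarith [(div_le_iff₀ ha).1 hx.1]
  · linarith [(le_div_iff₀ ha).1 hx.2]

lemma trans (h : PiecewiseC1On γ a b) (h' : PiecewiseC1On γ b c) (hab : a ≤ b) (hbc : b ≤ c) :
    PiecewiseC1On γ a c := by
  rw [piecewiseC1On_iff] at h h' ⊢
  obtain ⟨hc, n, t, ht, rfl, rfl, h⟩ := h
  obtain ⟨hc', n', t', ht', hjoin, rfl, h'⟩ := h'
  have hleft : ∀ i ≤ n, (if i ≤ n then t i else t' (i - n)) = t i := fun i hi => if_pos hi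
  have hright : ∀ i ≥ n, (if i ≤ n then t i else t' (i - n)) = t' (i - n) := by
    intro i hi
    rcases hi.eq_or_lt with rfl | hi
    · simp [hjoin]
    · exact if_neg (by omega)
  refine ⟨?_, n + n', fun i => if i ≤ n then t i else t' (i - n), monotone_nat_of_le_succ ?_,
    hleft 0 (Nat.zero_le n), (hright _ (Nat.le_add_right n n')).trans (by simp), fun i hi => ?_⟩
  · rw [← Icc_union_Icc_eq_Icc hab hbc]
    exact hc.union_of_isClosed hc' isClosed_Icc isClosed_Icc
  · intro i
    rcases Nat.lt_or_ge i n with hin | hin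
    · rw [hleft i hin.le, hleft (i + 1) hin]
      exact ht (Nat.le_succ i)
    · rw [hright i hin, hright (i + 1) (by omega)]
      exact ht' (by omega)
  · dsimp only
    rcases Nat.lt_or_ge i n with hin | hin
    · rw [hleft i hin.le, hleft (i + 1) hin]
      exact h i hin
    · rw [hright i hin, hright (i + 1) (by omega), Nat.sub_add_comm hin]
      exact h' (i - n) (by omega)

lemma exists_lipschitzOnWith (h : PiecewiseC1On γ a b) : ∃ K, LipschitzOnWith K γ (Icc a b) := by
  rw [piecewiseC1On_iff] at h
  obtain ⟨-, n, t, ht, rfl, rfl, h⟩ := h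
  suffices ∀ m ≤ n, ∃ K, LipschitzOnWith K γ (Icc (t 0) (t m)) from this n le_rfl
  intro m
  induction m with
  | zero =>
    intro _
    rw [Icc_self]
    exact ⟨0, LipschitzOnWith.of_dist_le_mul (by rintro x rfl y rfl; simp)⟩
  | succ m ih =>
    intro hm
    obtain ⟨K, hK⟩ := ih (by omega)
    obtain ⟨K', hK'⟩ := (h m (by omega)).exists_lipschitzOnWith one_ne_zero
      (convex_Icc _ _) isCompact_Icc
    exact ⟨max K K', lipschitzOnWith_Icc_trans (hK.weaken (le_max_left _ _))
      (hK'.weaken (le_max_right _ _)) (ht (Nat.zero_le _)) (ht (Nat.le_succ _))⟩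

end PiecewiseC1On

lemma piecewiseC1On_of_contDiffOn (hab : a ≤ b) (h : ContDiffOn ℝ 1 γ (Icc a b)) :
    PiecewiseC1On γ a b := by
  rw [piecewiseC1On_iff]
  refine ⟨h.continuousOn, 1, fun i => if i = 0 then a else b, monotone_nat_of_le_succ fun i => ?_,
    by simp, by simp, fun i hi => ?_⟩
  · rcases Nat.eq_zero_or_pos i with rfl | hi
    · simpa using hab
    · simp [hi.ne']
  · obtain rfl : i = 0 := by omega
    simpa using h

end

/-! ### Length elements and intrinsic distances -/

section

variable {d : ℕ} {S K : Set (Euc d)} {G : Euc d → Euc d → ℝ} {x y z : Euc d} {L L' : ℝ}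
  {γ η σ : ℝ → Euc d} {a b p q : ℝ}

/-- The integrand `t ↦ G (γ t) (γ' t)` of the length of `γ` for the length element `G`. It uses
`deriv`, so it is meaningless at the finitely many corners of a piecewise `C¹` curve. -/
def speed (G : Euc d → Euc d → ℝ) (γ : ℝ → Euc d) (t : ℝ) : ℝ := G (γ t) (deriv γ t)

/-- Positive homogeneity of a length element in the velocity, which makes lengths independent of the
parametrization. -/
def PosHomogeneous (G : Euc d → Euc d → ℝ) : Prop :=
  ∀ x v, ∀ a : ℝ, 0 < a → G x (a • v) = a * G x v

/-- A piecewise `C¹` curve `γ : [0, 1] → S` from `x` to `y`. -/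
structure IsCurveIn (S : Set (Euc d)) (x y : Euc d) (γ : ℝ → Euc d) : Prop where
  piecewiseC1On : PiecewiseC1On γ 0 1
  mem : ∀ t ∈ Icc (0 : ℝ) 1, γ t ∈ S
  source : γ 0 = x
  target : γ 1 = y

/-- The infimum of the `G`-lengths of the piecewise `C¹` curves in `S` from `x` to `y`. The set of
lengths is written as in `bdist` and `dF`, of which this is the common generalization. -/
def intrinsicDist (S : Set (Euc d)) (G : Euc d → Euc d → ℝ) (x y : Euc d) : ℝ :=
  sInf {L : ℝ | ∃ γ : ℝ → Euc d, PiecewiseC1On γ 0 1 ∧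
    (∀ t ∈ Set.Icc (0 : ℝ) 1, γ t ∈ S) ∧ γ 0 = x ∧ γ 1 = y ∧
    L = ∫ t in (0 : ℝ)..(1 : ℝ), speed G γ t}

lemma bdist_eq_intrinsicDist (D : Set (Euc d)) (ξ ζ : Euc d) :
    bdist D ξ ζ = intrinsicDist (frontier D) (fun _ v => ‖v‖) ξ ζ := rfl

lemma dF_eq_intrinsicDist (D : Set (Euc d)) (π : Euc d → Euc d) (ε c : ℝ) (x y : Euc d) :
    dF D π ε c x y = intrinsicDist D (Fmet D π ε c) x y := rfl

/-- Some curve in `S` from `x` to `y` has length at most `L` for the length element `G`.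
Integrability is part of the definition, since the integral of a non-integrable speed is `0`. -/
def JoinedInLength (S : Set (Euc d)) (G : Euc d → Euc d → ℝ) (x y : Euc d) (L : ℝ) : Prop :=
  ∃ γ : ℝ → Euc d, IsCurveIn S x y γ ∧ IntervalIntegrable (speed G γ) volume 0 1 ∧
    ∫ t in (0 : ℝ)..1, speed G γ t ≤ L

lemma JoinedInLength.mono (h : JoinedInLength S G x y L) (hL : L ≤ L') :
    JoinedInLength S G x y L' :=
  let ⟨γ, hγ, hi, hle⟩ := h
  ⟨γ, hγ, hi, hle.trans hL⟩

lemma JoinedInLength.intrinsicDist_le (h : JoinedInLength S G x y L) (hG : ∀ x v, 0 ≤ G x v) :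
    intrinsicDist S G x y ≤ L := by
  obtain ⟨γ, hγ, -, hle⟩ := h
  refine le_trans (csInf_le ⟨0, ?_⟩ ⟨γ, hγ.1, hγ.2, hγ.3, hγ.4, rfl⟩) hle
  rintro _ ⟨η, -, -, -, -, rfl⟩
  exact intervalIntegral.integral_nonneg zero_le_one fun t _ => hG _ _

lemma JoinedInLength.le_intrinsicDist (h : JoinedInLength S G x y L)
    (hle : ∀ γ, IsCurveIn S x y γ → L' ≤ ∫ t in (0 : ℝ)..1, speed G γ t) :
    L' ≤ intrinsicDist S G x y := by
  obtain ⟨γ, hγ, -, -⟩ := h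
  refine le_csInf ⟨_, γ, hγ.1, hγ.2, hγ.3, hγ.4, rfl⟩ ?_
  rintro _ ⟨η, h₁, h₂, h₃, h₄, rfl⟩
  exact hle η ⟨h₁, h₂, h₃, h₄⟩

lemma joinedInLength_of_speed_le {C : ℝ} (hγ : IsCurveIn S x y γ)
    (hi : IntervalIntegrable (speed G γ) volume 0 1) (h : ∀ t ∈ Ioo (0 : ℝ) 1, speed G γ t ≤ C) :
    JoinedInLength S G x y C :=
  ⟨γ, hγ, hi, by
    simpa using intervalIntegral.integral_mono_on_of_le_Ioo zero_le_one hi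
      intervalIntegrable_const h⟩

lemma speed_comp_affine (hG : PosHomogeneous G) (ha : 0 < a) (γ : ℝ → Euc d) (b t : ℝ) :
    speed G (fun t => γ (a * t + b)) t = a * speed G γ (a * t + b) := by
  have hderiv := deriv_comp_mul_left a (fun s => γ (s + b)) t
  rw [deriv_comp_add_const] at hderiv
  simp only [speed, hderiv, hG _ _ a ha]

lemma eqOn_speed_of_eqOn_affine (hG : PosHomogeneous G) (ha : 0 < a) (hpq : p ≤ q)
    (he : EqOn σ (fun t => γ (a * t + b)) (Icc p q)) :
    EqOn (speed G σ) (fun t => a * speed G γ (a * t + b)) (uIoo p q) := by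
  intro t ht
  rw [uIoo_of_le hpq] at ht
  have hev : σ =ᶠ[𝓝 t] fun t => γ (a * t + b) := by
    filter_upwards [Icc_mem_nhds ht.1 ht.2] with s hs using he hs
  dsimp only
  rw [← speed_comp_affine hG ha, speed, speed, hev.deriv_eq, hev.eq_of_nhds]

lemma intervalIntegrable_speed_of_eqOn_affine (hG : PosHomogeneous G) (ha : 0 < a) (hpq : p ≤ q)
    (he : EqOn σ (fun t => γ (a * t + b)) (Icc p q))
    (hi : IntervalIntegrable (speed G γ) volume (a * p + b) (a * q + b)) :
    IntervalIntegrable (speed G σ) volume p q := by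
  rw [intervalIntegrable_congr_uIoo (eqOn_speed_of_eqOn_affine hG ha hpq he)]
  have h := (hi.comp_add_right b).comp_mul_left (c := a)
  simp only [add_sub_cancel_right, mul_div_cancel_left₀ _ ha.ne'] at h
  exact h.const_mul a

lemma integral_speed_of_eqOn_affine (hG : PosHomogeneous G) (ha : 0 < a) (hpq : p ≤ q)
    (he : EqOn σ (fun t => γ (a * t + b)) (Icc p q)) :
    ∫ t in p..q, speed G σ t = ∫ t in (a * p + b)..(a * q + b), speed G γ t := by
  rw [intervalIntegral.integral_congr_uIoo (eqOn_speed_of_eqOn_affine hG ha hpq he),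
    intervalIntegral.integral_const_mul]
  exact intervalIntegral.smul_integral_comp_mul_add (speed G γ) a b

/-- The concatenation of two curves parametrized by `[0, 1]`, each run at double speed. -/
def concat (γ η : ℝ → Euc d) (t : ℝ) : Euc d :=
  if t ≤ 1 / 2 then γ (2 * t + 0) else η (2 * t + -1)

lemma eqOn_concat_left (γ η : ℝ → Euc d) :
    EqOn (concat γ η) (fun t => γ (2 * t + 0)) (Icc 0 (1 / 2)) :=
  fun _ ht => if_pos ht.2

lemma eqOn_concat_right (h : γ 1 = η 0) :
    EqOn (concat γ η) (fun t => η (2 * t + -1)) (Icc (1 / 2) 1) := by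
  intro t ht
  rcases ht.1.eq_or_lt with rfl | hlt
  · norm_num [concat, h]
  · exact if_neg (not_le.2 hlt)

lemma IsCurveIn.concat (hγ : IsCurveIn S x y γ) (hη : IsCurveIn S y z η) :
    IsCurveIn S x z (concat γ η) := by
  have hl := eqOn_concat_left γ η
  have hr := eqOn_concat_right (hγ.target.trans hη.source.symm)
  have hγ' : PiecewiseC1On γ (2 * 0 + 0) (2 * (1 / 2) + 0) := by
    norm_num
    exact hγ.piecewiseC1On
  have hη' : PiecewiseC1On η (2 * (1 / 2) + -1) (2 * 1 + -1) := by
    norm_num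
    exact hη.piecewiseC1On
  refine ⟨((hγ'.comp_affine two_pos).congr hl).trans ((hη'.comp_affine two_pos).congr hr)
    (by norm_num) (by norm_num), fun t ht => ?_, ?_, ?_⟩
  · rcases le_total t (1 / 2) with h | h
    · rw [hl ⟨ht.1, h⟩]
      exact hγ.mem _ ⟨by linarith [ht.1], by linarith⟩
    · rw [hr ⟨h, ht.2⟩]
      exact hη.mem _ ⟨by linarith, by linarith [ht.2]⟩
  · rw [hl ⟨le_rfl, by norm_num⟩]
    simpa using hγ.source
  · rw [hr ⟨by norm_num, le_rfl⟩]
    norm_num [hη.target]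

lemma JoinedInLength.trans (h : JoinedInLength S G x y L) (h' : JoinedInLength S G y z L')
    (hG : PosHomogeneous G) : JoinedInLength S G x z (L + L') := by
  obtain ⟨γ, hγ, hγi, hγL⟩ := h
  obtain ⟨η, hη, hηi, hηL⟩ := h'
  have hl := eqOn_concat_left γ η
  have hr := eqOn_concat_right (hγ.target.trans hη.source.symm)
  have hli : IntervalIntegrable (speed G (concat γ η)) volume 0 (1 / 2) :=
    intervalIntegrable_speed_of_eqOn_affine hG two_pos (by norm_num) hl (by norm_num [hγi])
  have hri : IntervalIntegrable (speed G (concat γ η)) volume (1 / 2) 1 :=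
    intervalIntegrable_speed_of_eqOn_affine hG two_pos (by norm_num) hr (by norm_num [hηi])
  refine ⟨concat γ η, hγ.concat hη, hli.trans hri, ?_⟩
  rw [← intervalIntegral.integral_add_adjacent_intervals hli hri,
    integral_speed_of_eqOn_affine hG two_pos (by norm_num) hl,
    integral_speed_of_eqOn_affine hG two_pos (by norm_num) hr]
  norm_num
  exact add_le_add hγL hηL

lemma exists_joinedInLength_of_isPreconnected (hG : PosHomogeneous G) (hS : IsPreconnected S)
    (hloc : ∀ x ∈ S, ∃ V ∈ 𝓝[S] x, ∃ M, ∀ y ∈ V, ∀ z ∈ V, JoinedInLength S G y z M)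
    (hx : x ∈ S) (hy : y ∈ S) : ∃ M, JoinedInLength S G x y M := by
  refine hS.induction₂' (fun x y => ∃ M, JoinedInLength S G x y M) (fun z hz => ?_) ?_ hx hy
  · obtain ⟨V, hV, M, hM⟩ := hloc z hz
    have hzV := mem_of_mem_nhdsWithin hz hV
    filter_upwards [hV] with w hw using ⟨⟨M, hM z hzV w hw⟩, ⟨M, hM w hw z hzV⟩⟩
  · rintro p q r - - - ⟨M, hM⟩ ⟨M', hM'⟩
    exact ⟨M + M', hM.trans hM' hG⟩

lemma exists_forall_mem_of_isCompact {X R : Type*} [TopologicalSpace X] [Preorder R]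
    [IsDirectedOrder R] [Nonempty R] {K : Set X} {P : R → X → Prop} (hK : IsCompact K)
    (hP : ∀ x, Monotone fun C => P C x) (hloc : ∀ x ∈ K, ∃ C, ∀ᶠ y in 𝓝[K] x, P C y) :
    ∃ C, ∀ x ∈ K, P C x := by
  refine hK.induction_on (p := fun T => ∃ C, ∀ x ∈ T, P C x) ⟨Classical.arbitrary R, by simp⟩
    (fun s t hst ⟨C, hC⟩ => ⟨C, fun x hx => hC x (hst hx)⟩) ?_ fun x hx => ?_
  · rintro s t ⟨C₁, h₁⟩ ⟨C₂, h₂⟩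
    obtain ⟨C, hC₁, hC₂⟩ := exists_ge_ge C₁ C₂
    exact ⟨C, fun x hx => hx.elim (hP x hC₁ <| h₁ x ·) (hP x hC₂ <| h₂ x ·)⟩
  · obtain ⟨C, hC⟩ := hloc x hx
    exact ⟨_, hC, C, fun y hy => hy⟩

lemma exists_joinedInLength_of_isCompact (hG : PosHomogeneous G) (hS : IsPreconnected S)
    (hloc : ∀ x ∈ S, ∃ V ∈ 𝓝[S] x, ∃ M, ∀ y ∈ V, ∀ z ∈ V, JoinedInLength S G y z M)
    (hK : IsCompact K) (hKS : K ⊆ S) :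
    ∃ M, ∀ x ∈ K, ∀ y ∈ K, JoinedInLength S G x y M := by
  rcases K.eq_empty_or_nonempty with rfl | ⟨o, ho⟩
  · exact ⟨0, by simp⟩
  obtain ⟨M, hM⟩ : ∃ M, ∀ x ∈ K, JoinedInLength S G o x M ∧ JoinedInLength S G x o M := by
    refine exists_forall_mem_of_isCompact hK
      (fun x M M' hMM' h => ⟨h.1.mono hMM', h.2.mono hMM'⟩) fun x hx => ?_
    obtain ⟨V, hV, M, hM⟩ := hloc x (hKS hx)
    obtain ⟨M₁, h₁⟩ := exists_joinedInLength_of_isPreconnected hG hS hloc (hKS ho) (hKS hx)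
    obtain ⟨M₂, h₂⟩ := exists_joinedInLength_of_isPreconnected hG hS hloc (hKS hx) (hKS ho)
    have hxV := mem_of_mem_nhdsWithin (hKS hx) hV
    refine ⟨max (M₁ + M) (M + M₂), ?_⟩
    filter_upwards [nhdsWithin_mono _ hKS hV] with y hy
    exact ⟨(h₁.trans (hM x hxV y hy) hG).mono (le_max_left _ _),
      ((hM y hy x hxV).trans h₂ hG).mono (le_max_right _ _)⟩
  exact ⟨M + M, fun x hx y hy => (hM x hx).2.trans (hM y hy).1 hG⟩

end

/-! ### Calculus along Lipschitz curves -/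

section

variable {E : Type*} [NormedAddCommGroup E] [NormedSpace ℝ E] {a b : ℝ} {K : ℝ≥0}

lemma abs_sub_le_integral_of_abs_deriv_le {f g : ℝ → ℝ} (hab : a ≤ b)
    (hf : LipschitzOnWith K f (Icc a b)) (hg : IntervalIntegrable g volume a b)
    (h : ∀ᵐ t, t ∈ Ioo a b → |deriv f t| ≤ g t) : |f b - f a| ≤ ∫ t in a..b, g t := by
  have hac : AbsolutelyContinuousOnInterval f a b := by
    apply LipschitzOnWith.absolutelyContinuousOnInterval (K := K)
    rwa [uIcc_of_le hab]
  rw [← hac.integral_deriv_eq_sub, ← Real.norm_eq_abs]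
  refine intervalIntegral.norm_integral_le_of_norm_le hab ?_ hg
  have hne : ∀ᵐ t : ℝ, t ≠ b := by simp [ae_iff]
  filter_upwards [h, hne] with t ht htb htI using ht ⟨htI.1, htI.2.lt_of_ne htb⟩

lemma ae_differentiableAt_of_lipschitzOnWith [FiniteDimensional ℝ E] {f : ℝ → E}
    (hf : LipschitzOnWith K f (Icc a b)) : ∀ᵐ t, t ∈ Ioo a b → DifferentiableAt ℝ f t := by
  filter_upwards [hf.ae_differentiableWithinAt_of_mem_real] with t ht htI
  exact (ht (Ioo_subset_Icc_self htI)).differentiableAt (Icc_mem_nhds htI.1 htI.2)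

lemma abs_deriv_norm_le {f : ℝ → E} {t : ℝ} (hf : DifferentiableAt ℝ f t) :
    |deriv (fun t => ‖f t‖) t| ≤ ‖deriv f t‖ := by
  by_cases hn : DifferentiableAt ℝ (fun t => ‖f t‖) t
  · refine le_of_tendsto_of_tendsto (hasDerivAt_iff_tendsto_slope.1 hn.hasDerivAt).abs
      (hasDerivAt_iff_tendsto_slope.1 hf.hasDerivAt).norm (Eventually.of_forall fun s => ?_)
    dsimp only
    rw [← Real.norm_eq_abs, slope_def_module, slope_def_module, norm_smul, norm_smul]
    gcongr
    exact abs_norm_sub_norm_le _ _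
  · simp [deriv_zero_of_not_differentiableAt hn]

end

section

variable {d : ℕ} {S : Set (Euc d)} {x y : Euc d} {γ : ℝ → Euc d}

lemma intervalIntegrable_norm_deriv (hγ : PiecewiseC1On γ 0 1) :
    IntervalIntegrable (speed (fun _ v => ‖v‖) γ) volume 0 1 := by
  obtain ⟨K, hK⟩ := hγ.exists_lipschitzOnWith
  rw [intervalIntegrable_iff_integrableOn_Ioo_of_le zero_le_one]
  refine Integrable.of_bound (stronglyMeasurable_deriv γ).norm.aestronglyMeasurable K ?_
  filter_upwards [ae_restrict_mem measurableSet_Ioo] with t ht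
  rw [speed, norm_norm]
  exact norm_deriv_le_of_lipschitzOn (Icc_mem_nhds ht.1 ht.2) hK

lemma posHomogeneous_norm : PosHomogeneous (fun _ v : Euc d => ‖v‖) := fun _ v a ha => by
  simp only [norm_smul, Real.norm_of_nonneg ha.le]

lemma IsCurveIn.norm_sub_le_integral (hγ : IsCurveIn S x y γ) :
    ‖x - y‖ ≤ ∫ t in (0 : ℝ)..1, speed (fun _ v => ‖v‖) γ t := by
  obtain ⟨K, hK⟩ := hγ.piecewiseC1On.exists_lipschitzOnWith
  have hnorm : LipschitzOnWith K (fun t => ‖γ t - x‖) (Icc 0 1) :=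
    LipschitzOnWith.of_dist_le_mul fun s hs t ht => by
      refine (abs_norm_sub_norm_le _ _).trans ?_
      rw [sub_sub_sub_cancel_right, ← dist_eq_norm]
      exact hK.dist_le_mul s hs t ht
  have hderiv : ∀ᵐ t, t ∈ Ioo (0 : ℝ) 1 →
      |deriv (fun t => ‖γ t - x‖) t| ≤ speed (fun _ v => ‖v‖) γ t := by
    filter_upwards [ae_differentiableAt_of_lipschitzOnWith hK] with t ht htI
    refine (abs_deriv_norm_le ((ht htI).sub_const x)).trans_eq ?_
    rw [deriv_sub_const, speed]
  have h := abs_sub_le_integral_of_abs_deriv_le zero_le_one hnorm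
    (intervalIntegrable_norm_deriv hγ.piecewiseC1On) hderiv
  rwa [hγ.source, hγ.target, sub_self, norm_zero, sub_zero, abs_norm, norm_sub_rev] at h

end

/-! ### The Finsler metric -/

section

variable {d : ℕ} {D : Set (Euc d)} {π : Euc d → Euc d} {ε c : ℝ} {x p : Euc d}

lemma norm_nvec (h : x ≠ p) : ‖nvec x p‖ = 1 := by
  have : ‖p - x‖ ≠ 0 := norm_ne_zero_iff.2 (sub_ne_zero.2 h.symm)
  rw [nvec, norm_smul, norm_inv, norm_norm, inv_mul_cancel₀ this]

lemma nvec_self (x : Euc d) : nvec x x = 0 := by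
  simp [nvec]

lemma norm_vN (x p v : Euc d) : ‖vN x p v‖ = |⟪v, nvec x p⟫| := by
  rcases eq_or_ne x p with rfl | h
  · simp [vN, nvec_self]
  · rw [vN, norm_smul, norm_nvec h, mul_one, Real.norm_eq_abs]

lemma norm_vN_sq_add_norm_vT_sq (x p v : Euc d) : ‖vN x p v‖ ^ 2 + ‖vT x p v‖ ^ 2 = ‖v‖ ^ 2 := by
  have hinner : ⟪v, vN x p v⟫ = ‖vN x p v‖ ^ 2 := by
    rw [norm_vN, sq_abs, vN, inner_smul_right, pow_two]
  rw [vT, norm_sub_sq_real, hinner]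
  ring

lemma norm_vN_le (x p v : Euc d) : ‖vN x p v‖ ≤ ‖v‖ :=
  le_of_sq_le_sq (by nlinarith [norm_vN_sq_add_norm_vT_sq x p v]) (norm_nonneg v)

lemma norm_vT_le (x p v : Euc d) : ‖vT x p v‖ ≤ ‖v‖ :=
  le_of_sq_le_sq (by nlinarith [norm_vN_sq_add_norm_vT_sq x p v]) (norm_nonneg v)

lemma norm_le_norm_vN_add_norm_vT (x p v : Euc d) : ‖v‖ ≤ ‖vN x p v‖ + ‖vT x p v‖ := by
  simpa [vT] using norm_add_le (vN x p v) (vT x p v)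

lemma vN_smul (x p v : Euc d) (a : ℝ) : vN x p (a • v) = a • vN x p v := by
  rw [vN, vN, real_inner_smul_left, smul_smul]

lemma vT_smul (x p v : Euc d) (a : ℝ) : vT x p (a • v) = a • vT x p v := by
  rw [vT, vT, vN_smul, smul_sub]

lemma Fmet_nonneg (hc : 0 ≤ c) (D : Set (Euc d)) (π : Euc d → Euc d) (x v : Euc d) :
    0 ≤ Fmet D π ε c x v := by
  have := infDist_nonneg (x := x) (s := frontier D)
  unfold Fmet
  split_ifs <;> positivity

lemma posHomogeneous_Fmet (D : Set (Euc d)) (π : Euc d → Euc d) (ε c : ℝ) :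
    PosHomogeneous (Fmet D π ε c) := fun x v a ha => by
  unfold Fmet
  split_ifs
  · rw [vN_smul, vT_smul, norm_smul, norm_smul, Real.norm_of_nonneg ha.le]
    ring
  · rw [norm_smul, Real.norm_of_nonneg ha.le]
    ring

lemma Fmet_le_mul_norm (hc : 0 ≤ c) {a : ℝ} (ha : 0 < a) (hax : a ≤ infDist x (frontier D))
    (v : Euc d) : Fmet D π ε c x v ≤ (1 / (2 * a) + 1 / √a + c) * ‖v‖ := by
  unfold Fmet
  split_ifs
  · calc _ ≤ ‖v‖ / (2 * a) + ‖v‖ / √a := by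
          gcongr
          exacts [norm_vN_le _ _ _, norm_vT_le _ _ _]
      _ = (1 / (2 * a) + 1 / √a + 0) * ‖v‖ := by ring
      _ ≤ _ := by gcongr
  · gcongr
    exact le_add_of_nonneg_left (by positivity)

lemma mul_norm_le_Fmet {Δ : ℝ} (hΔ : 1 ≤ Δ) (hx : 0 < infDist x (frontier D))
    (hxΔ : infDist x (frontier D) ≤ Δ) (v : Euc d) :
    min c (1 / (2 * Δ)) * ‖v‖ ≤ Fmet D π ε c x v := by
  unfold Fmet
  split_ifs
  · have hsqrt : √(infDist x (frontier D)) ≤ 2 * Δ :=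
      (Real.sqrt_le_sqrt hxΔ).trans (Real.sqrt_le_iff.2 ⟨by linarith, by nlinarith⟩)
    calc _ ≤ 1 / (2 * Δ) * (‖vN x (π x) v‖ + ‖vT x (π x) v‖) := by
          gcongr
          exacts [min_le_right _ _, norm_le_norm_vN_add_norm_vT _ _ _]
      _ = ‖vN x (π x) v‖ / (2 * Δ) + ‖vT x (π x) v‖ / (2 * Δ) := by ring
      _ ≤ _ := by
          have := Real.sqrt_pos.2 hx
          gcongr
  · gcongr
    exact min_le_left _ _

lemma aestronglyMeasurable_vN {μ : Measure ℝ} {γ η w : ℝ → Euc d}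
    (hγ : AEStronglyMeasurable γ μ) (hη : AEStronglyMeasurable η μ)
    (hw : AEStronglyMeasurable w μ) : AEStronglyMeasurable (fun t => vN (γ t) (η t) (w t)) μ := by
  have hn : AEStronglyMeasurable (fun t => nvec (γ t) (η t)) μ :=
    (hη.sub hγ).norm.aemeasurable.inv.aestronglyMeasurable.smul (hη.sub hγ)
  exact (hw.inner (𝕜 := ℝ) hn).smul hn

end

/-! ### Nearest point maps -/

section

variable {d : ℕ} {D : Set (Euc d)} {π : Euc d → Euc d} {γ : ℝ → Euc d} {ε c : ℝ} {x : Euc d}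

/-- `π` sends each point of `D` to a nearest boundary point, which is the only one for the points at
distance at most `ε` from the boundary. -/
structure IsNearestPointMap (D : Set (Euc d)) (π : Euc d → Euc d) (ε : ℝ) : Prop where
  mem_frontier : ∀ x ∈ D, π x ∈ frontier D
  dist_eq : ∀ x ∈ D, dist x (π x) = infDist x (frontier D)
  eq_of_dist_eq : ∀ x ∈ D, infDist x (frontier D) ≤ ε →
    ∀ q ∈ frontier D, dist x q = infDist x (frontier D) → q = π x

namespace IsNearestPointMap

lemma infDist_pos (hπ : IsNearestPointMap D π ε) (hD : IsOpen D) (hx : x ∈ D) :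
    0 < infDist x (frontier D) :=
  (isClosed_frontier.notMem_iff_infDist_pos ⟨_, hπ.mem_frontier x hx⟩).1 fun h =>
    hD.inter_frontier_eq.subset ⟨hx, h⟩

lemma ne_apply (hπ : IsNearestPointMap D π ε) (hD : IsOpen D) (hx : x ∈ D) : x ≠ π x :=
  dist_pos.1 (hπ.dist_eq x hx ▸ hπ.infDist_pos hD hx)

lemma hfun_pos (hπ : IsNearestPointMap D π ε) (hD : IsOpen D) (hx : x ∈ D) : 0 < hfun D x :=
  Real.sqrt_pos.2 (hπ.infDist_pos hD hx)

lemma continuousOn (hπ : IsNearestPointMap D π ε) (hfr : IsCompact (frontier D)) :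
    ContinuousOn π {x | x ∈ D ∧ infDist x (frontier D) ≤ ε} := by
  rintro x₀ ⟨hx₀, hx₀ε⟩
  set F := 𝓝[{x | x ∈ D ∧ infDist x (frontier D) ≤ ε}] x₀
  have hD : ∀ᶠ x in F, x ∈ D := eventually_nhdsWithin_of_forall fun x hx => hx.1
  refine hfr.tendsto_nhds_of_unique_mapClusterPt (hD.mono hπ.mem_frontier) fun q hq hcl => ?_
  refine hπ.eq_of_dist_eq x₀ hx₀ hx₀ε q hq (le_antisymm ?_ (infDist_le_dist_of_mem hq))
  refine le_of_forall_pos_le_add fun η hη => ?_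
  have hnear : ∃ᶠ x in F, π x ∈ ball q (η / 3) :=
    mapClusterPt_iff_frequently.1 hcl _ (ball_mem_nhds q (by positivity))
  have hx₀' : ∀ᶠ x in F, x ∈ ball x₀ (η / 3) :=
    eventually_nhdsWithin_of_eventually_nhds (ball_mem_nhds x₀ (by positivity))
  obtain ⟨x, hxq, hx, hxD⟩ := (hnear.and_eventually (hx₀'.and hD)).exists
  rw [mem_ball] at hxq hx
  calc dist x₀ q ≤ dist x₀ x + dist x (π x) + dist (π x) q := dist_triangle4 _ _ _ _
    _ ≤ dist x x₀ + (infDist x₀ (frontier D) + dist x x₀) + dist (π x) q := by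
      rw [hπ.dist_eq x hxD, dist_comm x₀ x]
      gcongr
      exact infDist_le_infDist_add_dist
    _ ≤ infDist x₀ (frontier D) + η := by linarith

lemma aestronglyMeasurable_speed_Fmet (hπ : IsNearestPointMap D π ε) (hfr : IsCompact (frontier D))
    (hγ : ContinuousOn γ (Icc 0 1)) (hγD : ∀ t ∈ Icc (0 : ℝ) 1, γ t ∈ D) :
    AEStronglyMeasurable (speed (Fmet D π ε c) γ) (volume.restrict (Icc 0 1)) := by
  have hδ : ContinuousOn (fun t => infDist (γ t) (frontier D)) (Icc 0 1) :=
    (continuous_infDist_pt _).comp_continuousOn hγ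
  let T : Set ℝ := Icc 0 1 ∩ {t | infDist (γ t) (frontier D) ≤ ε}
  have hT : MeasurableSet T :=
    (hδ.preimage_isClosed_of_isClosed isClosed_Icc isClosed_Iic).measurableSet
  have hderiv (μ : Measure ℝ) : AEStronglyMeasurable (deriv γ) μ :=
    (stronglyMeasurable_deriv γ).aestronglyMeasurable
  have hγT := hγ.mono (inter_subset_left : T ⊆ Icc 0 1)
  have hπT : ContinuousOn (fun t => π (γ t)) T :=
    (hπ.continuousOn hfr).comp hγT fun t ht => ⟨hγD t ht.1, ht.2⟩
  have hδT := ((hδ.mono (inter_subset_left : T ⊆ _)).aestronglyMeasurable (μ := volume)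
    hT).aemeasurable
  have hvN := aestronglyMeasurable_vN (hγT.aestronglyMeasurable (μ := volume) hT)
    (hπT.aestronglyMeasurable hT) (hderiv _)
  have hvT := (hderiv _).sub hvN
  rw [← inter_union_sdiff (Icc (0 : ℝ) 1) {t | infDist (γ t) (frontier D) ≤ ε},
    aestronglyMeasurable_union_iff]
  constructor
  · refine ((hvN.norm.aemeasurable.div (hδT.const_mul 2)).add
      (hvT.norm.aemeasurable.div hδT.sqrt)).aestronglyMeasurable.congr ?_
    filter_upwards [ae_restrict_mem hT] with t ht
    exact (if_pos ht.2).symm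
  · refine ((hderiv _).norm.const_mul c).congr ?_
    rw [← sdiff_self_inter]
    filter_upwards [ae_restrict_mem (measurableSet_Icc.diff hT)] with t ht
    exact (if_neg fun h => ht.2 ⟨ht.1, h⟩).symm

lemma intervalIntegrable_speed_Fmet (hπ : IsNearestPointMap D π ε) (hD : IsOpen D)
    (hfr : IsCompact (frontier D)) (hc : 0 ≤ c) (hγ : PiecewiseC1On γ 0 1)
    (hγD : ∀ t ∈ Icc (0 : ℝ) 1, γ t ∈ D) :
    IntervalIntegrable (speed (Fmet D π ε c) γ) volume 0 1 := by
  obtain ⟨K, hK⟩ := hγ.exists_lipschitzOnWith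
  obtain ⟨t₀, ht₀, hmin⟩ := isCompact_Icc.exists_isMinOn (nonempty_Icc.2 zero_le_one)
    ((continuous_infDist_pt (frontier D)).comp_continuousOn hK.continuousOn)
  have ha := hπ.infDist_pos hD (hγD t₀ ht₀)
  set a := infDist (γ t₀) (frontier D)
  rw [intervalIntegrable_iff_integrableOn_Ioo_of_le zero_le_one]
  refine Integrable.of_bound ((hπ.aestronglyMeasurable_speed_Fmet hfr hK.continuousOn
    hγD).mono_measure (Measure.restrict_mono Ioo_subset_Icc_self le_rfl))
    ((1 / (2 * a) + 1 / √a + c) * K) ?_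
  filter_upwards [ae_restrict_mem measurableSet_Ioo] with t ht
  rw [speed, Real.norm_of_nonneg (Fmet_nonneg hc D π _ _)]
  refine (Fmet_le_mul_norm hc ha (hmin (Ioo_subset_Icc_self ht)) _).trans ?_
  gcongr
  exact norm_deriv_le_of_lipschitzOn (Icc_mem_nhds ht.1 ht.2) hK

end IsNearestPointMap

end

/-! ### The filling distance -/

section

variable {a b s s' Q : ℝ}

/-- The expression in the definition of `dH`, for arbitrary heights `a`, `b` and an arbitrary
distance `s` between the feet. -/
def fillDist (s a b : ℝ) : ℝ := 2 * Real.log ((s + max a b) / √(a * b))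

lemma dH_eq_fillDist {d : ℕ} (D : Set (Euc d)) (π : Euc d → Euc d) (x y : Euc d) :
    dH D π x y = fillDist (bdist D (π x) (π y)) (hfun D x) (hfun D y) := rfl

lemma fillDist_eq (hs : 0 ≤ s) (ha : 0 < a) (hb : 0 < b) :
    fillDist s a b = 2 * Real.log (s + max a b) - Real.log a - Real.log b := by
  have hmax : 0 < max a b := lt_max_of_lt_left ha
  rw [fillDist, Real.log_div (by positivity) (by positivity), Real.log_sqrt (by positivity),
    Real.log_mul ha.ne' hb.ne']
  ring

lemma fillDist_le_add_log (hs : 0 ≤ s) (hs' : 0 ≤ s') (ha : 0 < a) (hb : 0 < b) (hQ : 0 < Q)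
    (h : s + max a b ≤ Q * (s' + max a b)) :
    fillDist s a b ≤ fillDist s' a b + 2 * Real.log Q := by
  have hmax : 0 < max a b := lt_max_of_lt_left ha
  have hlog := Real.log_le_log (by positivity) h
  rw [Real.log_mul hQ.ne' (by positivity)] at hlog
  rw [fillDist_eq hs ha hb, fillDist_eq hs' ha hb]
  linarith

lemma fillDist_le_fillDist (hs : 0 ≤ s) (ha : 0 < a) (hb : 0 < b) (h : s ≤ s') :
    fillDist s a b ≤ fillDist s' a b := by
  simpa using fillDist_le_add_log hs (hs.trans h) ha hb one_pos (by linarith)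

end

/-! ### The potential -/

section

variable {K s' m m' t w : ℝ}

/-- The height `√m`, damped so that its logarithmic derivative is smaller than that of `√m` by
`m' / (4 √m)`. This slack absorbs the normal part of the variation of the distance to the base point
in `potential`. -/
def dampedSqrt (m : ℝ) : ℝ := √m * Real.exp (-√m / 2)

/-- The function `2 log (s / K + w) - log w` of the distance `s` to a base point and of the damped
height `w` of a boundary distance `m`. It is the filling distance to the base point, up to a
constant, and its variation along a curve is bounded by the length of the curve. -/
def potential (K s m : ℝ) : ℝ :=
  2 * Real.log (s / K + dampedSqrt m) - Real.log (dampedSqrt m)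

lemma dampedSqrt_pos (hm : 0 < m) : 0 < dampedSqrt m :=
  mul_pos (Real.sqrt_pos.2 hm) (Real.exp_pos _)

lemma dampedSqrt_le_sqrt (m : ℝ) : dampedSqrt m ≤ √m :=
  mul_le_of_le_one_right (Real.sqrt_nonneg m)
    (Real.exp_le_one_iff.2 (by linarith [Real.sqrt_nonneg m]))

lemma sqrt_div_two_le_dampedSqrt (hm : m ≤ 1) : √m / 2 ≤ dampedSqrt m := by
  have hsqrt : √m ≤ 1 := Real.sqrt_le_one.2 hm
  have hexp : 1 / 2 ≤ Real.exp (-√m / 2) := by linarith [Real.add_one_le_exp (-√m / 2)]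
  calc √m / 2 = √m * (1 / 2) := by ring
    _ ≤ dampedSqrt m := by
      unfold dampedSqrt
      gcongr

lemma hasDerivAt_dampedSqrt {m : ℝ → ℝ} (hm : HasDerivAt m m' t) (hm₀ : 0 < m t) :
    HasDerivAt (fun t => dampedSqrt (m t))
      (dampedSqrt (m t) * (m' / (2 * m t) - m' / (4 * √(m t)))) t := by
  have hsqrt := hm.sqrt hm₀.ne'
  have hu : 0 < √(m t) := Real.sqrt_pos.2 hm₀
  have hmm : m' / (2 * m t) = m' / (2 * (√(m t) * √(m t))) := by rw [Real.mul_self_sqrt hm₀.le]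
  refine (hsqrt.mul (hsqrt.neg.div_const 2).exp).congr_deriv ?_
  rw [hmm, dampedSqrt, Pi.neg_apply]
  field_simp
  ring

lemma exists_lipschitzOnWith_potential {a b S : ℝ} (hK : 0 < K) (ha : 0 < a) :
    ∃ C, LipschitzOnWith C (fun q : ℝ × ℝ => potential K q.1 q.2) (Icc 0 S ×ˢ Icc a b) := by
  refine ContDiffOn.exists_lipschitzOnWith (n := 1) ?_ one_ne_zero
    ((convex_Icc _ _).prod (convex_Icc _ _)) (isCompact_Icc.prod isCompact_Icc)
  rintro ⟨s, m⟩ ⟨hs, hm⟩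
  have hm₀ : 0 < m := ha.trans_le hm.1
  have hw : 0 < dampedSqrt m := dampedSqrt_pos hm₀
  have hsum : 0 < s / K + dampedSqrt m := add_pos_of_nonneg_of_pos (div_nonneg hs.1 hK.le) hw
  have hsqrt : ContDiffAt ℝ 1 (fun q : ℝ × ℝ => √q.2) (s, m) := contDiffAt_snd.sqrt hm₀.ne'
  have hdamped : ContDiffAt ℝ 1 (fun q : ℝ × ℝ => dampedSqrt q.2) (s, m) :=
    hsqrt.mul (hsqrt.neg.div_const 2).exp
  exact ((contDiffAt_const.mul
    (((contDiffAt_fst.div_const K).add hdamped).log hsum.ne')).sub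
      (hdamped.log hw.ne')).contDiffWithinAt

/-- Here `κ` is the logarithmic derivative of the second summand `w` of `σ + w`. -/
lemma abs_two_mul_div_sub_le {κ σ σ' : ℝ} (hw : 0 < w) (hσ : 0 ≤ σ) :
    |2 * ((σ' + w * κ) / (σ + w)) - κ| ≤ |κ| + 2 * |σ'| / w := by
  have hsum : 0 < σ + w := by positivity
  have hratio : |(w - σ) / (σ + w)| ≤ 1 := by
    rw [abs_div, abs_of_pos hsum, div_le_one hsum, abs_le]
    constructor <;> linarith
  calc |2 * ((σ' + w * κ) / (σ + w)) - κ|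
      = |κ * ((w - σ) / (σ + w)) + 2 * σ' / (σ + w)| := by
        congr 1
        field_simp
        ring
    _ ≤ |κ| * |(w - σ) / (σ + w)| + 2 * |σ'| / (σ + w) := by
        refine (abs_add_le _ _).trans_eq ?_
        rw [abs_mul, abs_div (2 * σ'), abs_mul, abs_two, abs_of_pos hsum]
    _ ≤ |κ| + 2 * |σ'| / w := by
        gcongr
        · exact mul_le_of_le_one_right (abs_nonneg κ) hratio
        · linarith

lemma abs_deriv_potential_le {s m : ℝ → ℝ} (hK : 0 < K) (hs : HasDerivAt s s' t)
    (hm : HasDerivAt m m' t) (hs₀ : 0 ≤ s t) (hm₀ : 0 < m t) :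
    |deriv (fun t => potential K (s t) (m t)) t| ≤
      |m' / (2 * m t) - m' / (4 * √(m t))| + 2 * |s' / K| / dampedSqrt (m t) := by
  have hw : 0 < dampedSqrt (m t) := dampedSqrt_pos hm₀
  have hsum : 0 < s t / K + dampedSqrt (m t) := by positivity
  have hdamped := hasDerivAt_dampedSqrt hm hm₀
  have hpot : HasDerivAt (fun t => potential K (s t) (m t)) _ t :=
    ((((hs.div_const K).add hdamped).log hsum.ne').const_mul 2).sub (hdamped.log hw.ne')
  rw [hpot.deriv, mul_div_cancel_left₀ _ hw.ne']
  exact abs_two_mul_div_sub_le hw (by positivity)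

lemma log_sub_log_add_log_le_potential_sub {a b n s κ : ℝ} (hs : 0 ≤ s) (hm : 0 < m) (hn : 0 < n)
    (hκ : 0 < κ) (hκK : κ ≤ 1 / K) (hκa : κ * a ≤ dampedSqrt m) (hma : dampedSqrt m ≤ a)
    (hnb : dampedSqrt n ≤ b) :
    2 * Real.log (s + a) - Real.log a - Real.log b + 2 * Real.log κ ≤
      potential K s m - potential K 0 n := by
  have ha : 0 < a := (dampedSqrt_pos hm).trans_le hma
  have hsum : κ * (s + a) ≤ s / K + dampedSqrt m := by
    calc κ * (s + a) ≤ 1 / K * s + κ * a := by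
          rw [mul_add]
          gcongr
      _ ≤ s / K + dampedSqrt m := by
          rw [one_div_mul_eq_div]
          gcongr
  have hlog := Real.log_le_log (by positivity) hsum
  rw [Real.log_mul hκ.ne' (by positivity)] at hlog
  rw [potential, potential, zero_div, zero_add]
  linarith [Real.log_le_log (dampedSqrt_pos hm) hma, Real.log_le_log (dampedSqrt_pos hn) hnb]

lemma two_mul_abs_div_div_le {a u v : ℝ} (hK : 0 < K) (hu : 0 < u) (hKa : 4 ≤ K * a * u)
    (hw : u / 2 ≤ w) (hs : |s'| ≤ v) : 2 * |s' / K| / w ≤ a * v := by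
  have hv : 0 ≤ v := (abs_nonneg _).trans hs
  rw [abs_div, abs_of_pos hK]
  calc 2 * (|s'| / K) / w ≤ 2 * (v / K) / (u / 2) := by gcongr
    _ = 4 / (K * u) * v := by
      field_simp
      ring
    _ ≤ a * v := by
      gcongr
      rw [div_le_iff₀ (by positivity)]
      linarith

lemma abs_div_sub_add_div_le {τ : ℝ} (hK : 16 ≤ K) (hm : 0 < m) (hm₁ : m ≤ 1)
    (hw : √m / 2 ≤ w) (hτ : 0 ≤ τ) (hs : |s'| ≤ |m'| + τ) :
    |m' / (2 * m) - m' / (4 * √m)| + 2 * |s' / K| / w ≤ |m'| / (2 * m) + τ / √m := by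
  have hu : 0 < √m := Real.sqrt_pos.2 hm
  have hnormal : |m' / (2 * m) - m' / (4 * √m)| = |m'| / (2 * m) - |m'| / (4 * √m) := by
    have hnonneg : 0 ≤ 1 / (2 * m) - 1 / (4 * √m) := by
      rw [sub_nonneg]
      apply one_div_le_one_div_of_le (by positivity)
      nlinarith [Real.mul_self_sqrt hm.le, Real.sqrt_le_one.2 hm₁]
    rw [show m' / (2 * m) - m' / (4 * √m) = m' * (1 / (2 * m) - 1 / (4 * √m)) by ring, abs_mul,
      abs_of_nonneg hnonneg]
    ring
  have hbase : 2 * |s' / K| / w ≤ (|m'| + τ) / (4 * √m) := by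
    rw [abs_div, abs_of_pos (by linarith : 0 < K)]
    calc 2 * (|s'| / K) / w ≤ 2 * ((|m'| + τ) / 16) / (√m / 2) := by gcongr
      _ = (|m'| + τ) / (4 * √m) := by
        field_simp
        ring
  calc _ ≤ |m'| / (2 * m) - |m'| / (4 * √m) + (|m'| + τ) / (4 * √m) := by
        rw [hnormal]
        gcongr
    _ = |m'| / (2 * m) + τ / (4 * √m) := by ring
    _ ≤ |m'| / (2 * m) + τ / √m := by
        gcongr
        linarith

end

/-! ### The lower bound -/

section

variable {d : ℕ} {D : Set (Euc d)} {π : Euc d → Euc d} {γ : ℝ → Euc d} {p x y z : Euc d}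
  {ε ε₀ c c₁ K t : ℝ}

lemma hasDerivAt_norm_sub (hγ : DifferentiableAt ℝ γ t) (hne : γ t ≠ p) :
    HasDerivAt (fun s => ‖γ s - p‖) (-⟪deriv γ t, nvec (γ t) p⟫) t := by
  have hpos : 0 < ‖γ t - p‖ := norm_pos_iff.2 (sub_ne_zero.2 hne)
  have h := (hγ.hasDerivAt.sub_const p).norm_sq.sqrt (by positivity)
  simp only [Real.sqrt_sq (norm_nonneg _)] at h
  refine h.congr_deriv ?_
  rw [nvec, norm_sub_rev, inner_smul_right, ← neg_sub (γ t) p, inner_neg_right, real_inner_comm]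
  field_simp

lemma deriv_eq_of_eventuallyLE_norm_sub {φ : ℝ → ℝ} (hγ : DifferentiableAt ℝ γ t)
    (hφ : DifferentiableAt ℝ φ t) (hne : γ t ≠ p) (hle : ∀ᶠ s in 𝓝 t, φ s ≤ ‖γ s - p‖)
    (heq : φ t = ‖γ t - p‖) : deriv φ t = -⟪deriv γ t, nvec (γ t) p⟫ := by
  have hmin : IsLocalMin (fun s => ‖γ s - p‖ - φ s) t := by
    filter_upwards [hle] with s hs
    linarith
  linarith [hmin.hasDerivAt_eq_zero ((hasDerivAt_norm_sub hγ hne).sub hφ.hasDerivAt)]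

/-- The boundary distance, cut off at the height `ε₀`. -/
def truncDist (D : Set (Euc d)) (ε₀ : ℝ) (x : Euc d) : ℝ := min (infDist x (frontier D)) ε₀

lemma lipschitzWith_truncDist (D : Set (Euc d)) (ε₀ : ℝ) : LipschitzWith 1 (truncDist D ε₀) :=
  (lipschitz_infDist_pt (frontier D)).min_const ε₀

lemma exists_mul_hfun_le_dampedSqrt (hε₀ : 0 < ε₀) (hε₀₁ : ε₀ ≤ 1) {Δ : ℝ} (hΔ : 1 ≤ Δ)
    (hDΔ : ∀ x ∈ D, infDist x (frontier D) ≤ Δ) :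
    ∃ κ, 0 < κ ∧ ∀ x ∈ D, κ * hfun D x ≤ dampedSqrt (truncDist D ε₀ x) := by
  have hΔ₀ : 0 < Δ := by linarith
  refine ⟨√(ε₀ / Δ) / 2, by positivity, fun x hx => ?_⟩
  have hratio : ε₀ / Δ * infDist x (frontier D) ≤ truncDist D ε₀ x := by
    refine le_min (mul_le_of_le_one_left infDist_nonneg ?_) ?_
    · rw [div_le_one hΔ₀]
      linarith
    · rw [div_mul_eq_mul_div, div_le_iff₀ hΔ₀]
      exact mul_le_mul_of_nonneg_left (hDΔ x hx) hε₀.le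
  calc √(ε₀ / Δ) / 2 * hfun D x = √(ε₀ / Δ * infDist x (frontier D)) / 2 := by
        rw [hfun, Real.sqrt_mul (by positivity)]
        ring
    _ ≤ √(truncDist D ε₀ x) / 2 := by gcongr
    _ ≤ dampedSqrt (truncDist D ε₀ x) :=
        sqrt_div_two_le_dampedSqrt ((min_le_right _ _).trans hε₀₁)

lemma dampedSqrt_truncDist_le_hfun (D : Set (Euc d)) (ε₀ : ℝ) (x : Euc d) :
    dampedSqrt (truncDist D ε₀ x) ≤ hfun D x :=
  (dampedSqrt_le_sqrt _).trans (Real.sqrt_le_sqrt (min_le_left _ _))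

namespace IsNearestPointMap

lemma truncDist_pos (hπ : IsNearestPointMap D π ε) (hD : IsOpen D) (hε₀ : 0 < ε₀) (hx : x ∈ D) :
    0 < truncDist D ε₀ x :=
  lt_min (hπ.infDist_pos hD hx) hε₀

lemma abs_deriv_truncDist (hπ : IsNearestPointMap D π ε) (hD : IsOpen D)
    (hγ : DifferentiableAt ℝ γ t) (hm : DifferentiableAt ℝ (fun t => truncDist D ε₀ (γ t)) t)
    (ht : γ t ∈ D) (hle : infDist (γ t) (frontier D) ≤ ε₀) :
    |deriv (fun t => truncDist D ε₀ (γ t)) t| = ‖vN (γ t) (π (γ t)) (deriv γ t)‖ := by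
  rw [norm_vN, deriv_eq_of_eventuallyLE_norm_sub hγ hm (hπ.ne_apply hD ht)
    (Eventually.of_forall fun s => ?_) ?_, abs_neg]
  · rw [← dist_eq_norm, hπ.dist_eq _ ht]
    exact min_eq_left hle
  · rw [← dist_eq_norm]
    exact (min_le_left _ _).trans (infDist_le_dist_of_mem (hπ.mem_frontier _ ht))

lemma abs_deriv_potential_le_speed (hπ : IsNearestPointMap D π ε) (hD : IsOpen D)
    (hε₀ : 0 < ε₀) (hε₀₁ : ε₀ ≤ 1) (hε₀ε : ε₀ ≤ ε)
    (hF : ∀ x ∈ D, ∀ v, c₁ * ‖v‖ ≤ Fmet D π ε c x v) (hK : 16 ≤ K) (hKc : 4 ≤ K * c₁ * √ε₀)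
    (hγ : DifferentiableAt ℝ γ t) (hs : DifferentiableAt ℝ (fun t => ‖γ t - z‖) t)
    (hm : DifferentiableAt ℝ (fun t => truncDist D ε₀ (γ t)) t) (ht : γ t ∈ D) :
    |deriv (fun t => potential K ‖γ t - z‖ (truncDist D ε₀ (γ t))) t| ≤
      speed (Fmet D π ε c) γ t := by
  have hm₀ := hπ.truncDist_pos hD hε₀ ht
  have hm₁ : truncDist D ε₀ (γ t) ≤ 1 := (min_le_right _ _).trans hε₀₁
  have hdamped := sqrt_div_two_le_dampedSqrt hm₁
  have hs' : |deriv (fun t => ‖γ t - z‖) t| ≤ ‖deriv γ t‖ := by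
    simpa only [deriv_sub_const] using abs_deriv_norm_le (hγ.sub_const z)
  refine (abs_deriv_potential_le (s := fun t => ‖γ t - z‖) (m := fun t => truncDist D ε₀ (γ t))
    (by linarith) hs.hasDerivAt hm.hasDerivAt (norm_nonneg _) hm₀).trans ?_
  rcases le_or_gt (infDist (γ t) (frontier D)) ε₀ with hle | hlt
  · have hm' := hπ.abs_deriv_truncDist hD hγ hm ht hle
    have hmt : truncDist D ε₀ (γ t) = infDist (γ t) (frontier D) := min_eq_left hle
    have h := abs_div_sub_add_div_le (s' := deriv (fun t => ‖γ t - z‖) t)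
      (m' := deriv (fun t => truncDist D ε₀ (γ t)) t) hK hm₀ hm₁ hdamped
      (norm_nonneg (vT (γ t) (π (γ t)) (deriv γ t))) (by
        rw [hm']
        exact hs'.trans (norm_le_norm_vN_add_norm_vT _ _ _))
    rw [speed, Fmet, if_pos (hle.trans hε₀ε), ← hm']
    rwa [hmt] at h ⊢
  · have hmt : truncDist D ε₀ (γ t) = ε₀ := min_eq_right hlt.le
    have hm' : deriv (fun t => truncDist D ε₀ (γ t)) t = 0 :=
      IsLocalMax.deriv_eq_zero (Eventually.of_forall fun r =>
        (min_le_right _ _).trans hmt.ge)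
    rw [hmt] at hdamped ⊢
    rw [hm', zero_div, zero_div, sub_zero, abs_zero, zero_add]
    exact (two_mul_abs_div_div_le (by linarith) (Real.sqrt_pos.2 hε₀) hKc hdamped hs').trans
      (hF _ ht _)

lemma exists_lipschitzOnWith_potential_comp (hπ : IsNearestPointMap D π ε) (hD : IsOpen D)
    (hε₀ : 0 < ε₀) (hK : 0 < K) {Λ : ℝ≥0} (hγ : LipschitzOnWith Λ γ (Icc 0 1))
    (hγD : ∀ t ∈ Icc (0 : ℝ) 1, γ t ∈ D) (z : Euc d) :
    ∃ C, LipschitzOnWith C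
      (fun t => potential K ‖γ t - z‖ (truncDist D ε₀ (γ t))) (Icc 0 1) := by
  have hs := (LipschitzWith.dist_left z).comp_lipschitzOnWith hγ
  have hm := (lipschitzWith_truncDist D ε₀).comp_lipschitzOnWith hγ
  obtain ⟨t₀, ht₀, hmin⟩ := isCompact_Icc.exists_isMinOn (nonempty_Icc.2 zero_le_one)
    hm.continuousOn
  obtain ⟨t₁, -, hmax⟩ := isCompact_Icc.exists_isMaxOn (nonempty_Icc.2 zero_le_one)
    hs.continuousOn
  obtain ⟨C, hC⟩ := exists_lipschitzOnWith_potential (b := ε₀) (S := dist (γ t₁) z) hK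
    (hπ.truncDist_pos hD hε₀ (hγD t₀ ht₀))
  have hcomp := hC.comp (hs.prodMk hm) fun t ht =>
    ⟨⟨dist_nonneg, hmax ht⟩, ⟨hmin ht, min_le_right _ _⟩⟩
  simp only [← dist_eq_norm]
  exact ⟨_, hcomp⟩

lemma abs_potential_sub_le_integral (hπ : IsNearestPointMap D π ε) (hD : IsOpen D)
    (hfr : IsCompact (frontier D)) (hc : 0 ≤ c) (hε₀ : 0 < ε₀) (hε₀₁ : ε₀ ≤ 1) (hε₀ε : ε₀ ≤ ε)
    (hF : ∀ x ∈ D, ∀ v, c₁ * ‖v‖ ≤ Fmet D π ε c x v) (hK : 16 ≤ K) (hKc : 4 ≤ K * c₁ * √ε₀)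
    (hγ : IsCurveIn D x y γ) (z : Euc d) :
    |potential K ‖y - z‖ (truncDist D ε₀ y) - potential K ‖x - z‖ (truncDist D ε₀ x)| ≤
      ∫ t in (0 : ℝ)..1, speed (Fmet D π ε c) γ t := by
  obtain ⟨Λ, hΛ⟩ := hγ.piecewiseC1On.exists_lipschitzOnWith
  obtain ⟨C, hC⟩ :=
    hπ.exists_lipschitzOnWith_potential_comp hD hε₀ (by linarith : 0 < K) hΛ hγ.mem z
  have hs := (LipschitzWith.dist_left z).comp_lipschitzOnWith hΛ
  have hm := (lipschitzWith_truncDist D ε₀).comp_lipschitzOnWith hΛ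
  rw [← hγ.source, ← hγ.target]
  refine abs_sub_le_integral_of_abs_deriv_le
    (f := fun t => potential K ‖γ t - z‖ (truncDist D ε₀ (γ t))) zero_le_one hC
    (hπ.intervalIntegrable_speed_Fmet hD hfr hc hγ.piecewiseC1On hγ.mem) ?_
  filter_upwards [ae_differentiableAt_of_lipschitzOnWith hΛ,
    ae_differentiableAt_of_lipschitzOnWith hs, ae_differentiableAt_of_lipschitzOnWith hm]
    with t hγt hst hmt ht
  refine hπ.abs_deriv_potential_le_speed hD hε₀ hε₀₁ hε₀ε hF hK hKc (hγt ht) ?_ (hmt ht)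
    (hγ.mem t (Ioo_subset_Icc_self ht))
  simp only [← dist_eq_norm]
  exact hst ht

lemma exists_fillDist_sub_le_integral (hπ : IsNearestPointMap D π ε) (hD : IsOpen D)
    (hfr : IsCompact (frontier D)) (hε : 0 < ε) (hc : 0 < c) {Δ : ℝ} (hΔ : 1 ≤ Δ)
    (hDΔ : ∀ x ∈ D, infDist x (frontier D) ≤ Δ) :
    ∃ B, ∀ x y γ, IsCurveIn D x y γ →
      fillDist ‖x - y‖ (hfun D x) (hfun D y) - B ≤
        ∫ t in (0 : ℝ)..1, speed (Fmet D π ε c) γ t := by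
  have hε₀ : 0 < min ε 1 := lt_min hε one_pos
  obtain ⟨κ, hκ, hκD⟩ := exists_mul_hfun_le_dampedSqrt hε₀ (min_le_right ε 1) hΔ hDΔ
  set ε₀ := min ε 1
  set c₁ := min c (1 / (2 * Δ))
  have hc₁ : 0 < c₁ := by positivity
  have hF (x) (hx : x ∈ D) (v) : c₁ * ‖v‖ ≤ Fmet D π ε c x v :=
    mul_norm_le_Fmet hΔ (hπ.infDist_pos hD hx) (hDΔ x hx) v
  obtain ⟨K, hK, hKc⟩ : ∃ K, 16 ≤ K ∧ 4 ≤ K * c₁ * √ε₀ := by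
    refine ⟨max 16 (4 / (c₁ * √ε₀)), le_max_left _ _, ?_⟩
    rw [mul_assoc, ← div_le_iff₀ (by positivity)]
    exact le_max_right _ _
  have hbound (p) (hp : p ∈ D) (q) (hq : q ∈ D) :=
    log_sub_log_add_log_le_potential_sub (s := ‖p - q‖) (a := hfun D p) (norm_nonneg _)
      (hπ.truncDist_pos hD hε₀ hp) (hπ.truncDist_pos hD hε₀ hq)
      (lt_min hκ (by positivity)) (min_le_right κ (1 / K))
      ((mul_le_mul_of_nonneg_right (min_le_left _ _) (Real.sqrt_nonneg _)).trans (hκD p hp))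
      (dampedSqrt_truncDist_le_hfun D ε₀ p) (dampedSqrt_truncDist_le_hfun D ε₀ q)
  refine ⟨-(2 * Real.log (min κ (1 / K))), fun x y γ hγ => ?_⟩
  have hx : x ∈ D := hγ.source ▸ hγ.mem 0 (by simp)
  have hy : y ∈ D := hγ.target ▸ hγ.mem 1 (by simp)
  have hvar := hπ.abs_potential_sub_le_integral hD hfr hc.le hε₀ (min_le_right ε 1)
    (min_le_left ε 1) hF hK hKc hγ
  have hvar_x := (le_abs_self _).trans (hvar x)
  have hvar_y := (neg_le_abs _).trans (hvar y)
  rw [sub_self, norm_zero] at hvar_x hvar_y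
  rw [fillDist_eq (norm_nonneg _) (hπ.hfun_pos hD hx) (hπ.hfun_pos hD hy)]
  rcases max_choice (hfun D x) (hfun D y) with h | h <;> rw [h]
  · linarith [hbound x hx y hy]
  · rw [norm_sub_rev]
    linarith [hbound y hy x hx]

end IsNearestPointMap

end

/-! ### Defining functions and interior tangent balls -/

section

variable {d : ℕ} {D U : Set (Euc d)} {u : Euc d → ℝ} {x p y n : Euc d} {R : ℝ}

lemma ball_infDist_frontier_subset (hD : IsOpen D) (hx : x ∈ D) :
    ball x (infDist x (frontier D)) ⊆ D := by
  rcases (infDist_nonneg (x := x) (s := frontier D)).eq_or_lt with h₀ | h₀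
  · simp [← h₀]
  refine (convex_ball x _).isPreconnected.subset_left_of_subset_union hD
    isClosed_closure.isOpen_compl (disjoint_compl_right.mono_left subset_closure) (fun y hy => ?_)
    ⟨x, mem_ball_self h₀, hx⟩
  by_contra! hyD
  have hyf : y ∈ frontier D := by
    rw [frontier, hD.interior_eq]
    exact ⟨by_contra fun h => hyD (.inr h), fun h => hyD (.inl h)⟩
  exact (infDist_le_dist_of_mem hyf).not_gt (dist_comm x y ▸ mem_ball.1 hy)

/-- The normalized gradient of a defining function `u`; on the boundary it is the outer unit
normal. -/
def unormal (u : Euc d → ℝ) (y : Euc d) : Euc d := ‖gradient u y‖⁻¹ • gradient u y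

lemma norm_unormal (h : gradient u y ≠ 0) : ‖unormal u y‖ = 1 :=
  norm_smul_inv_norm h

lemma norm_smul_unormal (h : gradient u y ≠ 0) : ‖gradient u y‖ • unormal u y = gradient u y := by
  rw [unormal, smul_smul, mul_inv_cancel₀ (norm_ne_zero_iff.2 h), one_smul]

lemma fderiv_eq_norm_gradient_mul_inner_unormal (h : gradient u y ≠ 0) (v : Euc d) :
    fderiv ℝ u y v = ‖gradient u y‖ * ⟪unormal u y, v⟫ := by
  rw [← inner_gradient_left, ← real_inner_smul_left, norm_smul_unormal h]

/-- `u` is a `C²` defining function of `D` on the neighborhood `U` of `∂D`: the data over which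
`IsC2BoundedDomain` quantifies existentially. -/
structure IsDefiningFunction (D U : Set (Euc d)) (u : Euc d → ℝ) : Prop where
  isOpen : IsOpen U
  frontier_subset : frontier D ⊆ U
  contDiffOn : ContDiffOn ℝ 2 u U
  inter_eq : D ∩ U = {x | x ∈ U ∧ u x < 0}
  frontier_eq : frontier D = {x | x ∈ U ∧ u x = 0}
  fderiv_ne_zero : ∀ x ∈ frontier D, fderiv ℝ u x ≠ 0

namespace IsDefiningFunction

variable (h : IsDefiningFunction D U u)
include h

lemma mem_of_neg (hy : y ∈ U) (hu : u y < 0) : y ∈ D :=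
  (h.inter_eq ▸ (⟨hy, hu⟩ : y ∈ {x | x ∈ U ∧ u x < 0}) : y ∈ D ∩ U).1

lemma apply_eq_zero (hp : p ∈ frontier D) : u p = 0 :=
  (h.frontier_eq ▸ hp : p ∈ {x | x ∈ U ∧ u x = 0}).2

lemma mem_frontier (hy : y ∈ U) (hu : u y = 0) : y ∈ frontier D :=
  h.frontier_eq ▸ (⟨hy, hu⟩ : y ∈ {x | x ∈ U ∧ u x = 0})

lemma apply_nonpos_of_mem_closure (hy : y ∈ U) (hyD : y ∈ closure D) : u y ≤ 0 := by
  rcases closure_eq_self_union_frontier D ▸ hyD with hyD | hyf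
  · exact (h.inter_eq ▸ (⟨hyD, hy⟩ : y ∈ D ∩ U) : y ∈ {x | x ∈ U ∧ u x < 0}).2.le
  · exact (h.apply_eq_zero hyf).le

lemma mem_nhds (hp : p ∈ frontier D) : U ∈ 𝓝 p :=
  h.isOpen.mem_nhds (h.frontier_subset hp)

lemma contDiffAt (hy : y ∈ U) : ContDiffAt ℝ 2 u y :=
  h.contDiffOn.contDiffAt (h.isOpen.mem_nhds hy)

lemma hasFDerivAt (hy : y ∈ U) : HasFDerivAt u (fderiv ℝ u y) y :=
  ((h.contDiffAt hy).differentiableAt (by norm_num)).hasFDerivAt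

lemma gradient_ne_zero (hp : p ∈ frontier D) : gradient u p ≠ 0 := fun h₀ =>
  h.fderiv_ne_zero p hp (by rw [← toDual_gradient, h₀, map_zero])

lemma contDiffOn_gradient : ContDiffOn ℝ 1 (gradient u) U :=
  (InnerProductSpace.toDual ℝ (Euc d)).symm.contDiff.comp_contDiffOn
    (h.contDiffOn.fderiv_of_isOpen h.isOpen (by norm_num))

lemma exists_contDiffOn_unormal :
    ∃ W, IsOpen W ∧ frontier D ⊆ W ∧ ContDiffOn ℝ 1 (unormal u) W := by
  have hg := h.contDiffOn_gradient
  refine ⟨U ∩ gradient u ⁻¹' {0}ᶜ, hg.continuousOn.isOpen_inter_preimage h.isOpen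
    isOpen_compl_singleton, fun x hx => ⟨h.frontier_subset hx, h.gradient_ne_zero hx⟩, ?_⟩
  have hg' := hg.mono (inter_subset_left (t := gradient u ⁻¹' {0}ᶜ))
  exact ((hg'.norm ℝ fun x hx => hx.2).inv fun x hx => norm_ne_zero_iff.2 hx.2).smul hg'

-- Lagrange multipliers: `p` minimizes the distance to `x` on the level set `{u = 0}`.
lemma exists_sub_eq_smul_unormal (hp : p ∈ frontier D)
    (hxp : dist x p = infDist x (frontier D)) : ∃ c : ℝ, x - p = c • unormal u p := by
  have hmin : IsLocalMinOn (fun y => ‖y - x‖ ^ 2) {y | u y = u p} p := by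
    filter_upwards [nhdsWithin_le_nhds (h.mem_nhds hp), self_mem_nhdsWithin] with y hyU hy
    have hyf := h.mem_frontier hyU (hy.trans (h.apply_eq_zero hp))
    rw [← dist_eq_norm, ← dist_eq_norm, dist_comm p, dist_comm y, hxp]
    exact pow_le_pow_left₀ infDist_nonneg (infDist_le_dist_of_mem hyf) 2
  have hφ : HasStrictFDerivAt (fun y => ‖y - x‖ ^ 2) (2 • innerSL ℝ (p - x)) p :=
    (hasStrictFDerivAt_norm_sq (p - x)).comp p ((hasStrictFDerivAt_id p).sub_const x)
  obtain ⟨a, b, hab, heq⟩ := IsLocalExtrOn.exists_multipliers_of_hasStrictFDerivAt_1d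
    (.inl hmin) ((h.contDiffAt (h.frontier_subset hp)).hasStrictFDerivAt (by norm_num)) hφ
  have hvec : a • gradient u p + (2 * b) • (p - x) = 0 := by
    refine ext_inner_right ℝ fun v => ?_
    have := congr($heq v)
    simp only [add_apply, smul_apply, innerSL_apply_apply, smul_eq_mul,
      nsmul_eq_mul, zero_apply, Nat.cast_ofNat] at this
    rw [inner_add_left, real_inner_smul_left, real_inner_smul_left, inner_gradient_left,
      inner_zero_left, ← this]
    ring
  have hb : b ≠ 0 := by
    rintro rfl
    rw [mul_zero, zero_smul, add_zero, smul_eq_zero, or_iff_left (h.gradient_ne_zero hp)] at hvec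
    exact hab (by rw [hvec, Prod.mk_zero_zero])
  refine ⟨(2 * b)⁻¹ * a * ‖gradient u p‖, ?_⟩
  rw [← smul_smul, norm_smul_unormal (h.gradient_ne_zero hp), ← smul_smul,
    eq_neg_of_add_eq_zero_left hvec, ← smul_neg, neg_sub, inv_smul_smul₀ (by positivity)]

lemma fderiv_sub_nonpos_of_segment_subset (hp : p ∈ frontier D)
    (hseg : segment ℝ p x ⊆ closure D) : fderiv ℝ u p (x - p) ≤ 0 := by
  have hmax : IsLocalMaxOn u (closure D) p := by
    filter_upwards [nhdsWithin_le_nhds (h.mem_nhds hp), self_mem_nhdsWithin] with y hyU hy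
    exact (h.apply_nonpos_of_mem_closure hyU hy).trans_eq (h.apply_eq_zero hp).symm
  exact hmax.hasFDerivWithinAt_nonpos (h.hasFDerivAt (h.frontier_subset hp)).hasFDerivWithinAt
    (sub_mem_posTangentConeAt_of_segment_subset hseg)

lemma eq_sub_smul_unormal (hD : IsOpen D) (hx : x ∈ D) (hp : p ∈ frontier D)
    (hxp : dist x p = infDist x (frontier D)) :
    x = p - infDist x (frontier D) • unormal u p := by
  obtain ⟨c, hc⟩ := h.exists_sub_eq_smul_unormal hp hxp
  have hg := h.gradient_ne_zero hp
  have hxp' : x ≠ p := fun heq =>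
    (disjoint_frontier_iff_isOpen.2 hD).notMem_of_mem_left hp (heq ▸ hx)
  have hseg : segment ℝ p x ⊆ closure D := by
    refine ((convex_closedBall x (dist x p)).segment_subset (mem_closedBall'.2 le_rfl)
      (mem_closedBall_self dist_nonneg)).trans ?_
    rw [← closure_ball x (dist_ne_zero.2 hxp')]
    exact closure_mono (hxp ▸ ball_infDist_frontier_subset hD hx)
  have hc₀ : c ≤ 0 := by
    have := h.fderiv_sub_nonpos_of_segment_subset hp hseg
    rw [hc, fderiv_eq_norm_gradient_mul_inner_unormal hg, real_inner_smul_right,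
      real_inner_self_eq_norm_sq, norm_unormal hg, one_pow, mul_one] at this
    exact nonpos_of_mul_nonpos_right this (norm_pos_iff.2 hg)
  have hδ : infDist x (frontier D) = -c := by
    rw [← hxp, dist_eq_norm, hc, norm_smul, norm_unormal hg, mul_one, Real.norm_of_nonpos hc₀]
  rw [hδ, neg_smul, sub_neg_eq_add, ← hc, add_sub_cancel]

end IsDefiningFunction

lemma norm_sub_sq_add_inner_neg_of_mem_ball (hn : ‖n‖ = 1) (hy : y ∈ ball (p - R • n) R) :
    ‖y - p‖ ^ 2 + 2 * R * ⟪n, y - p⟫ < 0 := by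
  have hlt : ‖(y - p) + R • n‖ ^ 2 < R ^ 2 := by
    rw [mem_ball, dist_eq_norm, ← sub_add] at hy
    gcongr
  rw [norm_add_sq_real, real_inner_smul_right, norm_smul, hn, Real.norm_eq_abs, mul_one, sq_abs,
    real_inner_comm] at hlt
  linarith

lemma norm_sub_lt_two_mul_of_mem_ball (hn : ‖n‖ = 1) (hy : y ∈ ball (p - R • n) R) :
    ‖y - p‖ < 2 * R := by
  have hR : 0 < R := pos_of_mem_ball hy
  rw [mem_ball, dist_eq_norm] at hy
  calc ‖y - p‖ = ‖(y - (p - R • n)) - R • n‖ := by congr 1; abel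
    _ ≤ ‖y - (p - R • n)‖ + ‖R • n‖ := norm_sub_le _ _
    _ < R + R := by rw [norm_smul, hn, Real.norm_of_nonneg hR.le, mul_one]; gcongr
    _ = 2 * R := (two_mul R).symm

lemma abs_sub_sub_fderiv_le {K : ℝ≥0} {S : Set (Euc d)} (hS : Convex ℝ S)
    (hu : ∀ z ∈ S, DifferentiableAt ℝ u z) (hK : LipschitzOnWith K (fderiv ℝ u) S)
    (hp : p ∈ S) (hy : y ∈ S) : |u y - u p - fderiv ℝ u p (y - p)| ≤ K * ‖y - p‖ ^ 2 := by
  rw [pow_two, ← mul_assoc]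
  refine (hS.inter (convex_closedBall p ‖y - p‖)).norm_image_sub_le_of_norm_hasFDerivWithin_le'
    (fun z hz => (hu z hz.1).hasFDerivAt.hasFDerivWithinAt) (fun z hz => ?_)
    ⟨hp, mem_closedBall_self (norm_nonneg _)⟩ ⟨hy, mem_closedBall_iff_norm.2 le_rfl⟩
  exact (hK.norm_sub_le hz.1 hp).trans (by gcongr; exact mem_closedBall_iff_norm.1 hz.2)

namespace IsDefiningFunction

variable (h : IsDefiningFunction D U u)
include h

lemma ball_subset_of_lipschitzOnWith_fderiv {K : ℝ≥0} {S : Set (Euc d)} (hS : Convex ℝ S)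
    (hSU : S ⊆ U) (hK : LipschitzOnWith K (fderiv ℝ u) S) (hp : p ∈ frontier D)
    (hpS : ball p (2 * R) ⊆ S) (hR : 2 * R * K ≤ ‖gradient u p‖) :
    ball (p - R • unormal u p) R ⊆ D := by
  intro y hy
  have hR₀ : 0 < R := pos_of_mem_ball hy
  have hg := h.gradient_ne_zero hp
  have hyS : y ∈ S :=
    hpS (mem_ball_iff_norm.2 (norm_sub_lt_two_mul_of_mem_ball (norm_unormal hg) hy))
  have hsq := norm_sub_sq_add_inner_neg_of_mem_ball (norm_unormal hg) hy
  have htaylor := (abs_le.1 (abs_sub_sub_fderiv_le hS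
    (fun z hz => (h.hasFDerivAt (hSU hz)).differentiableAt) hK
    (hpS (mem_ball_self (by positivity))) hyS)).2
  rw [fderiv_eq_norm_gradient_mul_inner_unormal hg, h.apply_eq_zero hp] at htaylor
  refine h.mem_of_neg (hSU hyS) ?_
  have hmul : 2 * R * (K * ‖y - p‖ ^ 2 + ‖gradient u p‖ * ⟪unormal u p, y - p⟫) < 0 := by
    have hgp : 0 < ‖gradient u p‖ := norm_pos_iff.2 hg
    nlinarith [sq_nonneg ‖y - p‖]
  nlinarith [neg_of_mul_neg_right hmul (by positivity)]

lemma exists_interior_ball (hfr : IsCompact (frontier D)) :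
    ∃ R₀ > 0, ∀ p ∈ frontier D, ∀ R ≤ R₀, ball (p - R • unormal u p) R ⊆ D := by
  have key : ∀ᶠ R₀ in 𝓝 (0 : ℝ), ∀ p ∈ frontier D, p ∈ frontier D → ∀ R ≤ R₀,
      ball (p - R • unormal u p) R ⊆ D := by
    refine hfr.eventually_forall_of_forall_eventually fun ξ hξ => ?_
    have hfderiv : ContDiffAt ℝ 1 (fderiv ℝ u) ξ :=
      (h.contDiffAt (h.frontier_subset hξ)).fderiv_right (by norm_num)
    obtain ⟨K, T, hT, hK⟩ := hfderiv.exists_lipschitzOnWith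
    obtain ⟨r, hr, hball⟩ := Metric.mem_nhds_iff.1 (inter_mem (h.mem_nhds hξ) hT)
    have hgrad : ∀ᶠ q : ℝ × Euc d in 𝓝 (0, ξ), 2 * q.1 * K < ‖gradient u q.2‖ := by
      have hcont : ContinuousAt (gradient u) ξ :=
        h.contDiffOn_gradient.continuousOn.continuousAt (h.mem_nhds hξ)
      refine ContinuousAt.eventually_lt (by fun_prop)
        (ContinuousAt.comp (g := fun p => ‖gradient u p‖) hcont.norm continuousAt_snd) ?_
      simpa using h.gradient_ne_zero hξ
    have hnear : ∀ᶠ q : ℝ × Euc d in 𝓝 (0, ξ), 2 * q.1 + dist q.2 ξ < r :=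
      ContinuousAt.eventually_lt (by fun_prop) continuousAt_const (by simpa using hr)
    filter_upwards [hgrad, hnear] with ⟨R₀, p⟩ hgp hpr hp R hR
    refine h.ball_subset_of_lipschitzOnWith_fderiv (convex_ball ξ r)
      (fun z hz => (hball hz).1) (hK.mono fun z hz => (hball hz).2) hp (ball_subset_ball' ?_) ?_
    · linarith
    · exact le_trans (by gcongr) hgp.le
  obtain ⟨R₀, hR₀, hpos⟩ :=
    ((key.filter_mono nhdsWithin_le_nhds).and (self_mem_nhdsWithin (s := Ioi 0))).exists
  exact ⟨R₀, hpos, fun p hp => hR₀ p hp hp⟩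

end IsDefiningFunction

end

/-! ### The boundary is chord-arc -/

section

variable {d : ℕ} {D U S B : Set (Euc d)} {u : Euc d → ℝ} {Φ : Euc d → Euc d} {K : ℝ≥0}
  {ξ p q : Euc d}

lemma joinedInLength_norm_of_lipschitzOnWith (hB : Convex ℝ B) (hΦ : ContDiffOn ℝ 1 Φ B)
    (hK : LipschitzOnWith K Φ B) (hm : MapsTo Φ B S) (hp : p ∈ B) (hq : q ∈ B) :
    JoinedInLength S (fun _ v => ‖v‖) (Φ p) (Φ q) (K * ‖p - q‖) := by
  have hline : MapsTo (AffineMap.lineMap p q) (Icc (0 : ℝ) 1) B :=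
    fun t ht => hB.lineMap_mem hp hq ht
  have hcurve : IsCurveIn S (Φ p) (Φ q) (Φ ∘ AffineMap.lineMap p q) :=
    ⟨piecewiseC1On_of_contDiffOn zero_le_one (hΦ.comp (by fun_prop) hline),
      fun t ht => hm (hline ht), by simp, by simp⟩
  refine joinedInLength_of_speed_le hcurve (intervalIntegrable_norm_deriv hcurve.piecewiseC1On)
    fun t ht => ?_
  have hlip := hK.comp (lipschitzWith_lineMap p q).lipschitzOnWith hline
  simpa [speed, dist_eq_norm] using norm_deriv_le_of_lipschitzOn (Icc_mem_nhds ht.1 ht.2) hlip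

lemma exists_joinedInLength_le_mul_norm_sub (hS : IsCompact S) (hpre : IsPreconnected S)
    (hloc : ∀ x ∈ S, ∃ V ∈ 𝓝[S] x, ∃ C : ℝ≥0, ∀ y ∈ V, ∀ z ∈ V,
      JoinedInLength S (fun _ v => ‖v‖) y z (C * ‖y - z‖)) :
    ∃ C : ℝ≥0, ∀ x ∈ S, ∀ y ∈ S, JoinedInLength S (fun _ v => ‖v‖) x y (C * ‖x - y‖) := by
  obtain ⟨M, hM⟩ : ∃ M : ℝ, ∀ x ∈ S, ∀ y ∈ S, JoinedInLength S (fun _ v => ‖v‖) x y M := by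
    refine exists_joinedInLength_of_isCompact posHomogeneous_norm hpre (fun x hx => ?_) hS
      subset_rfl
    obtain ⟨V, hV, C, hC⟩ := hloc x hx
    refine ⟨V ∩ ball x 1, inter_mem hV (mem_nhdsWithin_of_mem_nhds (ball_mem_nhds x one_pos)),
      C * 2, fun y hy z hz => (hC y hy.1 z hz.1).mono ?_⟩
    have hyz := dist_triangle_right y z x
    rw [dist_eq_norm] at hyz
    gcongr
    linarith [mem_ball.1 hy.2, mem_ball.1 hz.2]
  suffices h : ∃ C : ℝ≥0, ∀ q ∈ S ×ˢ S,
      JoinedInLength S (fun _ v => ‖v‖) q.1 q.2 (C * ‖q.1 - q.2‖) from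
    let ⟨C, hC⟩ := h
    ⟨C, fun x hx y hy => hC (x, y) ⟨hx, hy⟩⟩
  refine exists_forall_mem_of_isCompact (hS.prod hS)
    (fun q C C' hCC' h => h.mono (by gcongr)) ?_
  rintro ⟨x, y⟩ ⟨hx, hy⟩
  rcases eq_or_ne x y with rfl | hxy
  · obtain ⟨V, hV, C, hC⟩ := hloc x hx
    refine ⟨C, ?_⟩
    filter_upwards [nhdsWithin_prod hV hV] with q hq using hC _ hq.1 _ hq.2
  -- Away from the diagonal the uniform bound `M` is at most a multiple of the distance.
  · have hpos : 0 < ‖x - y‖ := norm_pos_iff.2 (sub_ne_zero.2 hxy)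
    have hlt : ∀ᶠ q : Euc d × Euc d in 𝓝 (x, y), ‖x - y‖ / 2 < ‖q.1 - q.2‖ :=
      ContinuousAt.eventually_lt continuousAt_const (by fun_prop) (by simpa [sub_eq_zero] using hxy)
    refine ⟨(M / (‖x - y‖ / 2)).toNNReal, ?_⟩
    filter_upwards [mem_nhdsWithin_of_mem_nhds hlt, self_mem_nhdsWithin] with q hq hqS
    refine (hM q.1 hqS.1 q.2 hqS.2).mono ?_
    calc M = M / (‖x - y‖ / 2) * (‖x - y‖ / 2) := by field_simp
      _ ≤ (M / (‖x - y‖ / 2)).toNNReal * ‖q.1 - q.2‖ := by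
        gcongr
        exact Real.le_coe_toNNReal _

/-- A map straightening the level sets of `u` near `ξ` into hyperplanes: it displaces `x` along
`∇u(ξ)` so that the linearization of `u` at its value is `u x`. -/
def straighten (u : Euc d → ℝ) (ξ x : Euc d) : Euc d :=
  x + ((u x - ⟪gradient u ξ, x - ξ⟫) / ‖gradient u ξ‖ ^ 2) • gradient u ξ

lemma inner_straighten_sub (hg : gradient u ξ ≠ 0) (x : Euc d) :
    ⟪gradient u ξ, straighten u ξ x - ξ⟫ = u x := by
  rw [straighten, add_sub_right_comm, inner_add_right, real_inner_smul_right,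
    real_inner_self_eq_norm_sq, div_mul_cancel₀ _ (by positivity), add_sub_cancel]

lemma straighten_self (hu : u ξ = 0) : straighten u ξ ξ = ξ := by
  simp [straighten, hu]

lemma contDiffAt_straighten (hu : ContDiffAt ℝ 1 u ξ) : ContDiffAt ℝ 1 (straighten u ξ) ξ :=
  contDiffAt_id.add (((hu.sub (contDiffAt_const.inner ℝ (contDiffAt_id.sub
    contDiffAt_const))).div_const _).smul contDiffAt_const)

lemma hasFDerivAt_straighten (hu : DifferentiableAt ℝ u ξ) :
    HasFDerivAt (straighten u ξ) (ContinuousLinearMap.id ℝ (Euc d)) ξ := by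
  have hinner : HasFDerivAt (fun x : Euc d => ⟪gradient u ξ, x - ξ⟫) (fderiv ℝ u ξ) ξ := by
    rw [← toDual_gradient]
    exact (innerSL ℝ (gradient u ξ)).hasFDerivAt.comp ξ ((hasFDerivAt_id ξ).sub_const ξ)
  have hcoeff : HasFDerivAt (fun x => (u x - ⟪gradient u ξ, x - ξ⟫) / ‖gradient u ξ‖ ^ 2)
      (0 : Euc d →L[ℝ] ℝ) ξ := by
    simpa [div_eq_mul_inv] using (hu.hasFDerivAt.sub hinner).mul_const (‖gradient u ξ‖ ^ 2)⁻¹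
  exact ((hasFDerivAt_id ξ).add (hcoeff.smul_const (gradient u ξ))).congr_fderiv (by simp)

namespace IsDefiningFunction

variable (h : IsDefiningFunction D U u)
include h

lemma exists_contDiffAt_symm_straighten (hξ : ξ ∈ frontier D) :
    ∃ Φ : Euc d → Euc d, ContDiffAt ℝ 1 Φ ξ ∧ Φ ξ = ξ ∧
      (∀ᶠ x in 𝓝 ξ, Φ (straighten u ξ x) = x) ∧ ∀ᶠ y in 𝓝 ξ, straighten u ξ (Φ y) = y := by
  have hu := h.contDiffAt (h.frontier_subset hξ)
  have hΨ := contDiffAt_straighten (hu.of_le (by norm_num))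
  have hΨ' : HasFDerivAt (straighten u ξ) ((ContinuousLinearEquiv.refl ℝ (Euc d) :
      Euc d ≃L[ℝ] Euc d) : Euc d →L[ℝ] Euc d) ξ :=
    hasFDerivAt_straighten (hu.differentiableAt (by norm_num))
  have hself := straighten_self (h.apply_eq_zero hξ)
  set e := hΨ.toOpenPartialHomeomorph _ hΨ' one_ne_zero
  have hsource : ξ ∈ e.source := hΨ.mem_toOpenPartialHomeomorph_source hΨ' one_ne_zero
  have htarget : ξ ∈ e.target := by
    simpa only [hself] using hΨ.image_mem_toOpenPartialHomeomorph_target hΨ' one_ne_zero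
  refine ⟨e.symm, ?_, ?_, e.eventually_left_inverse hsource, e.eventually_right_inverse htarget⟩
  · have hsymm := hΨ.to_localInverse hΨ' one_ne_zero
    rwa [hself] at hsymm
  · have hsymm := hΨ.localInverse_apply_image hΨ' one_ne_zero
    rwa [hself] at hsymm

lemma exists_joinedInLength_frontier_nhds (hξ : ξ ∈ frontier D) :
    ∃ V ∈ 𝓝[frontier D] ξ, ∃ C : ℝ≥0, ∀ y ∈ V, ∀ z ∈ V,
      JoinedInLength (frontier D) (fun _ v => ‖v‖) y z (C * ‖y - z‖) := by
  have hΨ := contDiffAt_straighten ((h.contDiffAt (h.frontier_subset hξ)).of_le (by norm_num))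
  have hself := straighten_self (h.apply_eq_zero hξ)
  obtain ⟨Φ, hΦ, hΦξ, hleft, hright⟩ := h.exists_contDiffAt_symm_straighten hξ
  obtain ⟨K, T, hT, hK⟩ := hΦ.exists_lipschitzOnWith
  obtain ⟨K', T', hT', hK'⟩ := hΨ.exists_lipschitzOnWith
  have hU : ∀ᶠ y in 𝓝 ξ, Φ y ∈ U :=
    hΦ.continuousAt.eventually_mem (hΦξ.symm ▸ h.mem_nhds hξ)
  obtain ⟨r, hr, hball⟩ := Metric.eventually_nhds_iff_ball.1
    (hright.and ((hΦ.eventually (by simp)).and (hU.and hT)))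
  set B := ball ξ r ∩ {y | ⟪gradient u ξ, y - ξ⟫ = 0}
  have hB : Convex ℝ B := by
    simp only [B, inner_sub_right, sub_eq_zero]
    exact (convex_ball ξ r).inter (convex_hyperplane (innerSL ℝ (gradient u ξ)).isLinear _)
  have hm : MapsTo Φ B (frontier D) := by
    rintro y ⟨hy, hy₀⟩
    refine h.mem_frontier (hball y hy).2.2.1 ?_
    rw [← inner_straighten_sub (h.gradient_ne_zero hξ), (hball y hy).1, hy₀]
  have hV : ∀ᶠ x in 𝓝 ξ, straighten u ξ x ∈ ball ξ r :=
    hΨ.continuousAt.eventually_mem (hself.symm ▸ ball_mem_nhds ξ hr)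
  refine ⟨_, inter_mem (mem_nhdsWithin_of_mem_nhds (inter_mem (inter_mem hV hleft) hT'))
    self_mem_nhdsWithin, K * K', ?_⟩
  rintro y ⟨⟨⟨hyV, hyΦ⟩, hyT⟩, hyf⟩ z ⟨⟨⟨hzV, hzΦ⟩, hzT⟩, hzf⟩
  have hmem : ∀ x, straighten u ξ x ∈ ball ξ r → x ∈ frontier D → straighten u ξ x ∈ B :=
    fun x hx hxf => ⟨hx, by
      rw [mem_ofPred_eq, inner_straighten_sub (h.gradient_ne_zero hξ), h.apply_eq_zero hxf]⟩
  rw [← hyΦ, ← hzΦ]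
  refine (joinedInLength_norm_of_lipschitzOnWith hB
    (fun y hy => (hball y hy.1).2.1.contDiffWithinAt) (hK.mono fun y hy => (hball y hy.1).2.2.2)
    hm (hmem y hyV hyf) (hmem z hzV hzf)).mono ?_
  rw [hyΦ, hzΦ, NNReal.coe_mul, mul_assoc]
  gcongr
  exact hK'.norm_sub_le hyT hzT

lemma exists_joinedInLength_frontier (hfr : IsCompact (frontier D))
    (hfc : IsPreconnected (frontier D)) : ∃ C : ℝ≥0, ∀ ξ ∈ frontier D, ∀ ζ ∈ frontier D,
      JoinedInLength (frontier D) (fun _ v => ‖v‖) ξ ζ (C * ‖ξ - ζ‖) :=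
  exists_joinedInLength_le_mul_norm_sub hfr hfc fun _ => h.exists_joinedInLength_frontier_nhds

end IsDefiningFunction

end

/-! ### The collar of the boundary -/

section

variable {d : ℕ} {D : Set (Euc d)} {π n : Euc d → Euc d} {α : ℝ → Euc d}
  {ε c R M a b r s t : ℝ} {L C : ℝ≥0} {x y p q : Euc d}

lemma IsNearestPointMap.exists_joinedInLength_nhds (hπ : IsNearestPointMap D π ε) (hD : IsOpen D)
    (hfr : IsCompact (frontier D)) (hc : 0 ≤ c) (hx : x ∈ D) :
    ∃ V ∈ 𝓝[D] x, ∃ M, ∀ y ∈ V, ∀ z ∈ V, JoinedInLength D (Fmet D π ε c) y z M := by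
  have hδ := hπ.infDist_pos hD hx
  set r := infDist x (frontier D) / 2 with hr_def
  have hr : 0 < r := half_pos hδ
  have hball : ball x r ⊆ D :=
    (ball_subset_ball (half_le_self hδ.le)).trans (ball_infDist_frontier_subset hD hx)
  have hinfDist : ∀ y ∈ ball x r, r ≤ infDist y (frontier D) := fun y hy => by
    have := infDist_le_infDist_add_dist (x := x) (y := y) (s := frontier D)
    linarith [mem_ball'.1 hy]
  refine ⟨ball x r, mem_nhdsWithin_of_mem_nhds (ball_mem_nhds x hr),
    (1 / (2 * r) + 1 / √r + c) * (r + r), fun y hy z hz => ?_⟩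
  have hline : ∀ t ∈ Icc (0 : ℝ) 1, AffineMap.lineMap y z t ∈ ball x r :=
    fun t ht => (convex_ball x r).lineMap_mem hy hz ht
  have hcurve : IsCurveIn D y z (AffineMap.lineMap y z) :=
    ⟨piecewiseC1On_of_contDiffOn zero_le_one (by fun_prop), fun t ht => hball (hline t ht),
      by simp, by simp⟩
  refine joinedInLength_of_speed_le hcurve
    (hπ.intervalIntegrable_speed_Fmet hD hfr hc hcurve.piecewiseC1On hcurve.mem) fun t ht => ?_
  refine (Fmet_le_mul_norm hc hr (hinfDist _ (hline t (Ioo_subset_Icc_self ht))) _).trans ?_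
  gcongr
  rw [AffineMap.hasDerivAt_lineMap.deriv, ← dist_eq_norm]
  exact (dist_triangle_right z y x).trans (add_le_add (mem_ball.1 hz).le (mem_ball.1 hy).le)

lemma isCompact_setOf_le_infDist_frontier (hD : Bornology.IsBounded D) (hR : 0 < R) :
    IsCompact {x | x ∈ D ∧ R ≤ infDist x (frontier D)} := by
  have heq : {x | x ∈ D ∧ R ≤ infDist x (frontier D)} =
      closure D ∩ {x | R ≤ infDist x (frontier D)} := by
    refine Subset.antisymm (fun x hx => ⟨subset_closure hx.1, hx.2⟩) fun x hx => ⟨?_, hx.2⟩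
    rcases closure_eq_self_union_frontier D ▸ hx.1 with hxD | hxf
    · exact hxD
    · exact absurd (infDist_zero_of_mem hxf) (hR.trans_le hx.2).ne'
  rw [heq]
  exact hD.isCompact_closure.inter_right (isClosed_le continuous_const (continuous_infDist_pt _))

lemma integral_abs_sub_div (ha : 0 < a) (hb : 0 < b) :
    ∫ t in (0 : ℝ)..1, |b - a| / (2 * ((b - a) * t + a)) = |Real.log b - Real.log a| / 2 := by
  have hnonneg : 0 ≤ ∫ t in (0 : ℝ)..1, ((b - a) * t + a)⁻¹ :=
    intervalIntegral.integral_nonneg zero_le_one fun t ht => inv_nonneg.2 <| by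
      nlinarith [mul_nonneg ht.1 hb.le, mul_nonneg (sub_nonneg.2 ht.2) ha.le]
  have hsubst := intervalIntegral.mul_integral_comp_mul_add
    (f := fun t => t⁻¹) (a := 0) (b := 1) (b - a) a
  rw [mul_zero, zero_add, mul_one, sub_add_cancel, integral_inv_of_pos ha hb,
    Real.log_div hb.ne' ha.ne'] at hsubst
  calc ∫ t in (0 : ℝ)..1, |b - a| / (2 * ((b - a) * t + a))
      = |b - a| / 2 * ∫ t in (0 : ℝ)..1, ((b - a) * t + a)⁻¹ := by
        rw [← intervalIntegral.integral_const_mul]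
        exact intervalIntegral.integral_congr fun t _ => by field_simp
    _ = |(b - a) * ∫ t in (0 : ℝ)..1, ((b - a) * t + a)⁻¹| / 2 := by
        rw [abs_mul, abs_of_nonneg hnonneg, div_mul_eq_mul_div]
    _ = |Real.log b - Real.log a| / 2 := by rw [hsubst]

/-- Fermi coordinates `p - s • n p`, `0 < s ≤ R`, along the boundary: `n` is a `C¹` extension of the
outer unit normal field, whose derivative is bounded by `L` on the boundary; `R` is a radius of
interior tangent balls; `C` is a chord-arc constant of the boundary. -/
structure Collar (D : Set (Euc d)) (π n : Euc d → Euc d) (ε R : ℝ) (L C : ℝ≥0) : Prop where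
  isOpen : IsOpen D
  isCompact_frontier : IsCompact (frontier D)
  isNearestPointMap : IsNearestPointMap D π ε
  pos : 0 < R
  le : R ≤ ε
  norm_normal : ∀ p ∈ frontier D, ‖n p‖ = 1
  contDiffAt : ∀ p ∈ frontier D, ContDiffAt ℝ 1 n p
  norm_fderiv_le : ∀ p ∈ frontier D, ‖fderiv ℝ n p‖ ≤ L
  ball_subset : ∀ p ∈ frontier D, ∀ s ≤ R, ball (p - s • n p) s ⊆ D
  eq_sub_smul : ∀ x ∈ D, x = π x - infDist x (frontier D) • n (π x)
  joinedInLength : ∀ ξ ∈ frontier D, ∀ ζ ∈ frontier D,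
    JoinedInLength (frontier D) (fun _ v => ‖v‖) ξ ζ (C * ‖ξ - ζ‖)

namespace Collar

variable (H : Collar D π n ε R L C)
include H

lemma sub_smul_mem (hp : p ∈ frontier D) (hs : 0 < s) (hsR : s ≤ R) : p - s • n p ∈ D :=
  H.ball_subset p hp s hsR (mem_ball_self hs)

lemma norm_sub_smul_sub (hp : p ∈ frontier D) (hs : 0 ≤ s) : ‖p - s • n p - p‖ = s := by
  rw [sub_sub_cancel_left, norm_neg, norm_smul, H.norm_normal p hp, mul_one,
    Real.norm_of_nonneg hs]

lemma infDist_sub_smul (hp : p ∈ frontier D) (hs : 0 ≤ s) (hsR : s ≤ R) :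
    infDist (p - s • n p) (frontier D) = s := by
  refine le_antisymm ((infDist_le_dist_of_mem hp).trans_eq
    (by rw [dist_eq_norm, H.norm_sub_smul_sub hp hs])) ((le_infDist ⟨p, hp⟩).2 fun q hq => ?_)
  by_contra! hlt
  exact H.isOpen.inter_frontier_eq.subset ⟨H.ball_subset p hp s hsR (mem_ball'.2 hlt), hq⟩

lemma apply_sub_smul (hp : p ∈ frontier D) (hs : 0 < s) (hsR : s ≤ R) :
    π (p - s • n p) = p := by
  have hδ := H.infDist_sub_smul hp hs.le hsR
  exact (H.isNearestPointMap.eq_of_dist_eq _ (H.sub_smul_mem hp hs hsR)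
    (hδ.trans_le (hsR.trans H.le)) p hp
    (by rw [hδ, dist_eq_norm, H.norm_sub_smul_sub hp hs.le])).symm

lemma nvec_sub_smul (hp : p ∈ frontier D) (hs : 0 < s) : nvec (p - s • n p) p = n p := by
  rw [nvec, norm_sub_rev, H.norm_sub_smul_sub hp hs.le, sub_sub_cancel, inv_smul_smul₀ hs.ne']

lemma Fmet_sub_smul (hp : p ∈ frontier D) (hs : 0 < s) (hsR : s ≤ R) (v : Euc d) :
    Fmet D π ε c (p - s • n p) v =
      |⟪v, n p⟫| / (2 * s) + ‖v - ⟪v, n p⟫ • n p‖ / √s := by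
  rw [Fmet, H.infDist_sub_smul hp hs.le hsR, if_pos (hsR.trans H.le), H.apply_sub_smul hp hs hsR,
    norm_vN, vT, vN, H.nvec_sub_smul hp hs]

lemma Fmet_sub_smul_smul_normal (hp : p ∈ frontier D) (hs : 0 < s) (hsR : s ≤ R) (a : ℝ) :
    Fmet D π ε c (p - s • n p) (a • n p) = |a| / (2 * s) := by
  have hinner : ⟪a • n p, n p⟫ = a := by
    rw [real_inner_smul_left, real_inner_self_eq_norm_sq, H.norm_normal p hp, one_pow, mul_one]
  rw [H.Fmet_sub_smul hp hs hsR, hinner, sub_self, norm_zero, zero_div, add_zero]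

lemma joinedInLength_sub_smul (hc : 0 ≤ c) (hp : p ∈ frontier D) (ha : a ∈ Ioc 0 R)
    (hb : b ∈ Ioc 0 R) : JoinedInLength D (Fmet D π ε c) (p - a • n p) (p - b • n p)
      (|Real.log b - Real.log a| / 2) := by
  have hheight : ∀ t ∈ Icc (0 : ℝ) 1, (b - a) * t + a ∈ Ioc 0 R := fun t ht => by
    simpa [AffineMap.lineMap_apply, mul_comm] using (convex_Ioc (0 : ℝ) R).lineMap_mem ha hb ht
  have hcurve : IsCurveIn D (p - a • n p) (p - b • n p) fun t => p - ((b - a) * t + a) • n p :=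
    ⟨piecewiseC1On_of_contDiffOn zero_le_one (by fun_prop),
      fun t ht => H.sub_smul_mem hp (hheight t ht).1 (hheight t ht).2, by simp, by simp⟩
  refine ⟨_, hcurve, H.isNearestPointMap.intervalIntegrable_speed_Fmet H.isOpen
    H.isCompact_frontier hc hcurve.piecewiseC1On hcurve.mem, ?_⟩
  rw [← integral_abs_sub_div ha.1 hb.1]
  refine (intervalIntegral.integral_congr fun t ht => ?_).le
  have hderiv : HasDerivAt (fun t => p - ((b - a) * t + a) • n p) ((a - b) • n p) t := by
    simpa [sub_smul] using
      ((((hasDerivAt_id t).const_mul (b - a)).add_const a).smul_const (n p)).const_sub p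
  rw [uIcc_of_le zero_le_one] at ht
  rw [speed, hderiv.deriv, H.Fmet_sub_smul_smul_normal hp (hheight t ht).1 (hheight t ht).2,
    abs_sub_comm]

-- The distance to the boundary is constant along the curve, so its velocity has no normal part.
lemma inner_deriv_sub_smul_eq_zero (hs : 0 < s) (hsR : s ≤ R)
    (hγ : DifferentiableAt ℝ (fun r => α r - s • n (α r)) t)
    (hα : ∀ᶠ r in 𝓝 t, α r ∈ frontier D) :
    ⟪deriv (fun r => α r - s • n (α r)) t, n (α t)⟫ = 0 := by
  have hp := hα.self_of_nhds
  have htouch := deriv_eq_of_eventuallyLE_norm_sub hγ (differentiableAt_const s) (p := α t)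
    (sub_ne_zero.1 (norm_pos_iff.1 (by rwa [H.norm_sub_smul_sub hp hs.le])))
    (hα.mono fun r hr => ?_) (H.norm_sub_smul_sub hp hs.le).symm
  · rwa [deriv_const, H.nvec_sub_smul hp hs, eq_comm, neg_eq_zero] at htouch
  · rw [← dist_eq_norm]
    exact (H.infDist_sub_smul hr hs.le hsR).symm.trans_le (infDist_le_dist_of_mem hp)

lemma speed_Fmet_sub_smul_le (hs : 0 < s) (hsR : s ≤ R) (hα : DifferentiableAt ℝ α t)
    (hαD : ∀ᶠ r in 𝓝 t, α r ∈ frontier D) :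
    speed (Fmet D π ε c) (fun r => α r - s • n (α r)) t ≤
      (1 + s * L) / √s * speed (fun _ v => ‖v‖) α t := by
  have hp := hαD.self_of_nhds
  have hγ : HasDerivAt (fun r => α r - s • n (α r))
      (deriv α t - s • fderiv ℝ n (α t) (deriv α t)) t :=
    hα.hasDerivAt.sub ((((H.contDiffAt _ hp).differentiableAt
      one_ne_zero).hasFDerivAt.comp_hasDerivAt t hα.hasDerivAt).const_smul s)
  rw [speed, speed, H.Fmet_sub_smul hp hs hsR,
    H.inner_deriv_sub_smul_eq_zero hs hsR hγ.differentiableAt hαD, abs_zero, zero_div, zero_add,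
    zero_smul, sub_zero, hγ.deriv, div_mul_eq_mul_div]
  gcongr
  calc ‖deriv α t - s • fderiv ℝ n (α t) (deriv α t)‖
      ≤ ‖deriv α t‖ + s * ‖fderiv ℝ n (α t) (deriv α t)‖ := by
        refine (norm_sub_le _ _).trans_eq ?_
        rw [norm_smul, Real.norm_of_nonneg hs.le]
    _ ≤ ‖deriv α t‖ + s * (L * ‖deriv α t‖) := by
        gcongr
        exact ContinuousLinearMap.le_of_opNorm_le _ (H.norm_fderiv_le _ hp) _
    _ = (1 + s * L) * ‖deriv α t‖ := by ring

lemma joinedInLength_sub_smul_sub_smul (hc : 0 ≤ c) (hp : p ∈ frontier D) (hq : q ∈ frontier D)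
    (hs : 0 < s) (hsR : s ≤ R) : JoinedInLength D (Fmet D π ε c) (p - s • n p) (q - s • n q)
      ((1 + s * L) / √s * (C * ‖p - q‖)) := by
  obtain ⟨α, hα, hαi, hαC⟩ := H.joinedInLength p hp q hq
  have hn : ContDiffOn ℝ 1 (fun y => y - s • n y) (frontier D) := fun y hy =>
    (contDiffAt_id.sub ((H.contDiffAt y hy).const_smul s)).contDiffWithinAt
  have hcurve : IsCurveIn D (p - s • n p) (q - s • n q) fun t => α t - s • n (α t) :=
    ⟨hα.piecewiseC1On.comp_contDiffOn hn hα.mem, fun t ht => H.sub_smul_mem (hα.mem t ht) hs hsR,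
      by rw [hα.source], by rw [hα.target]⟩
  have hi := H.isNearestPointMap.intervalIntegrable_speed_Fmet H.isOpen H.isCompact_frontier hc
    hcurve.piecewiseC1On hcurve.mem
  obtain ⟨K, hK⟩ := hα.piecewiseC1On.exists_lipschitzOnWith
  refine ⟨_, hcurve, hi, (intervalIntegral.integral_mono_ae_restrict (g := fun t =>
    (1 + s * L) / √s * speed (fun _ v => ‖v‖) α t) zero_le_one hi (hαi.const_mul _) ?_).trans ?_⟩
  · rw [EventuallyLE, ← restrict_Ioo_eq_restrict_Icc, ae_restrict_iff' measurableSet_Ioo]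
    filter_upwards [ae_differentiableAt_of_lipschitzOnWith hK] with t hdiff ht
    exact H.speed_Fmet_sub_smul_le hs hsR (hdiff ht)
      (eventually_of_mem (Icc_mem_nhds ht.1 ht.2) hα.mem)
  · rw [intervalIntegral.integral_const_mul]
    gcongr

lemma joinedInLength_climb (hc : 0 ≤ c) (hx : x ∈ D) (hr : hfun D x ≤ r) (hrR : r ^ 2 ≤ R) :
    JoinedInLength D (Fmet D π ε c) x (π x - r ^ 2 • n (π x))
      (Real.log r - Real.log (hfun D x)) ∧
    JoinedInLength D (Fmet D π ε c) (π x - r ^ 2 • n (π x)) x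
      (Real.log r - Real.log (hfun D x)) := by
  have hp := H.isNearestPointMap.mem_frontier x hx
  have hh := H.isNearestPointMap.hfun_pos H.isOpen hx
  have hfoot : x = π x - hfun D x ^ 2 • n (π x) := by
    rw [hfun, Real.sq_sqrt infDist_nonneg]
    exact H.eq_sub_smul x hx
  have hr₀ : r ^ 2 ∈ Ioc 0 R := ⟨pow_pos (hh.trans_le hr) 2, hrR⟩
  have hx₀ : hfun D x ^ 2 ∈ Ioc 0 R := ⟨pow_pos hh 2, le_trans (by gcongr) hrR⟩
  have hlog : |Real.log (r ^ 2) - Real.log (hfun D x ^ 2)| / 2 =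
      Real.log r - Real.log (hfun D x) := by
    rw [Real.log_pow, Real.log_pow, ← mul_sub, abs_of_nonneg
      (mul_nonneg (by positivity) (sub_nonneg.2 (Real.log_le_log hh hr))), Nat.cast_ofNat,
      mul_div_cancel_left₀ _ two_ne_zero]
  have hup := H.joinedInLength_sub_smul hc hp hx₀ hr₀
  have hdown := H.joinedInLength_sub_smul hc hp hr₀ hx₀
  rw [← hfoot, hlog] at hup
  rw [← hfoot, abs_sub_comm, hlog] at hdown
  exact ⟨hup, hdown⟩

lemma joinedInLength_through_collar (hc : 0 ≤ c) (hx : x ∈ D) (hy : y ∈ D) (hxr : hfun D x ≤ r)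
    (hyr : hfun D y ≤ r) (hr : ‖π x - π y‖ ≤ r) (hrR : r ^ 2 ≤ R) :
    JoinedInLength D (Fmet D π ε c) x y
      (2 * Real.log r - Real.log (hfun D x) - Real.log (hfun D y) + (1 + R * L) * C) := by
  have hG := posHomogeneous_Fmet D π ε c
  have hr₀ : 0 < r := (H.isNearestPointMap.hfun_pos H.isOpen hx).trans_le hxr
  have htangential := H.joinedInLength_sub_smul_sub_smul hc (H.isNearestPointMap.mem_frontier x hx)
    (H.isNearestPointMap.mem_frontier y hy) (pow_pos hr₀ 2) hrR
  have hcost : (1 + r ^ 2 * L) / √(r ^ 2) * (C * ‖π x - π y‖) ≤ (1 + R * L) * C := by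
    rw [Real.sqrt_sq hr₀.le, div_mul_eq_mul_div, div_le_iff₀ hr₀, mul_assoc]
    have := H.pos
    gcongr
  refine (((H.joinedInLength_climb hc hx hxr hrR).1.trans htangential hG).trans
    (H.joinedInLength_climb hc hy hyr hrR).2 hG).mono ?_
  linarith

lemma exists_joinedInLength_core (hc : 0 ≤ c)
    (hM : ∀ x ∈ D, R ≤ infDist x (frontier D) → JoinedInLength D (Fmet D π ε c) x x M)
    (hM₀ : 0 ≤ M) (hx : x ∈ D) (hxr : hfun D x ≤ r) (hr : √R ≤ r) :
    ∃ z ∈ D, R ≤ infDist z (frontier D) ∧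
      JoinedInLength D (Fmet D π ε c) x z (Real.log r - Real.log (hfun D x) + M) ∧
      JoinedInLength D (Fmet D π ε c) z x (Real.log r - Real.log (hfun D x) + M) := by
  have hh := H.isNearestPointMap.hfun_pos H.isOpen hx
  rcases le_total R (infDist x (frontier D)) with hR | hR
  · have hlog := Real.log_le_log hh hxr
    have hxx := (hM x hx hR).mono (le_add_of_nonneg_left (sub_nonneg.2 hlog))
    exact ⟨x, hx, hR, hxx, hxx⟩
  · have hsq := Real.sq_sqrt H.pos.le
    have hlog := Real.log_le_log (Real.sqrt_pos.2 H.pos) hr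
    obtain ⟨hup, hdown⟩ := H.joinedInLength_climb hc hx (Real.sqrt_le_sqrt hR) hsq.le
    have hp := H.isNearestPointMap.mem_frontier x hx
    rw [hsq] at hup hdown
    exact ⟨_, H.sub_smul_mem hp H.pos le_rfl, (H.infDist_sub_smul hp H.pos.le le_rfl).ge,
      hup.mono (by linarith), hdown.mono (by linarith)⟩

theorem exists_joinedInLength_fillDist (hc : 0 ≤ c) (hD : IsPreconnected D)
    (hDb : Bornology.IsBounded D) : ∃ B, ∀ x ∈ D, ∀ y ∈ D, JoinedInLength D (Fmet D π ε c) x y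
      (fillDist ‖π x - π y‖ (hfun D x) (hfun D y) + B) := by
  have hG := posHomogeneous_Fmet D π ε c
  obtain ⟨M, hM⟩ := exists_joinedInLength_of_isCompact hG hD
    (fun x => H.isNearestPointMap.exists_joinedInLength_nhds H.isOpen H.isCompact_frontier hc)
    (isCompact_setOf_le_infDist_frontier hDb H.pos) fun x hx => hx.1
  have hcore : ∀ x ∈ D, R ≤ infDist x (frontier D) → ∀ y ∈ D, R ≤ infDist y (frontier D) →
      JoinedInLength D (Fmet D π ε c) x y |M| := fun x hx hxR y hy hyR =>
    (hM x ⟨hx, hxR⟩ y ⟨hy, hyR⟩).mono (le_abs_self M)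
  refine ⟨(1 + R * L) * C + 3 * |M|, fun x hx y hy => ?_⟩
  have hhx := H.isNearestPointMap.hfun_pos H.isOpen hx
  have hhy := H.isNearestPointMap.hfun_pos H.isOpen hy
  set r := max (max (hfun D x) (hfun D y)) ‖π x - π y‖
  have hxr : hfun D x ≤ r := (le_max_left _ _).trans (le_max_left _ _)
  have hyr : hfun D y ≤ r := (le_max_right _ _).trans (le_max_left _ _)
  have hfill : 2 * Real.log r - Real.log (hfun D x) - Real.log (hfun D y) ≤
      fillDist ‖π x - π y‖ (hfun D x) (hfun D y) := by
    rw [fillDist_eq (norm_nonneg _) hhx hhy]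
    have hr : r ≤ ‖π x - π y‖ + max (hfun D x) (hfun D y) :=
      max_le (le_add_of_nonneg_left (norm_nonneg _))
        (le_add_of_nonneg_right (hhx.le.trans (le_max_left _ _)))
    gcongr
  rcases le_total r √R with hr | hr
  · have hrR : r ^ 2 ≤ R := (Real.le_sqrt (hhx.le.trans hxr) H.pos.le).1 hr
    refine (H.joinedInLength_through_collar hc hx hy hxr hyr (le_max_right _ _) hrR).mono ?_
    linarith [abs_nonneg M]
  · have hself := fun z hz hzR => hcore z hz hzR z hz hzR
    obtain ⟨x', hx', hxR, hxx', -⟩ :=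
      H.exists_joinedInLength_core hc hself (abs_nonneg M) hx hxr hr
    obtain ⟨y', hy', hyR, -, hyy'⟩ :=
      H.exists_joinedInLength_core hc hself (abs_nonneg M) hy hyr hr
    refine ((hxx'.trans (hcore x' hx' hxR y' hy' hyR) hG).trans hyy' hG).mono ?_
    have := H.pos
    have hRLC : 0 ≤ (1 + R * L) * C := by positivity
    linarith

end Collar

lemma IsDefiningFunction.exists_collar {U : Set (Euc d)} {u : Euc d → ℝ}
    (h : IsDefiningFunction D U u) (hD : IsOpen D) (hfr : IsCompact (frontier D))
    (hfc : IsPreconnected (frontier D)) (hπ : IsNearestPointMap D π ε) (hε : 0 < ε) :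
    ∃ R L C, Collar D π (unormal u) ε R L C := by
  obtain ⟨W, hW, hfW, hn⟩ := h.exists_contDiffOn_unormal
  obtain ⟨R₀, hR₀, hball⟩ := h.exists_interior_ball hfr
  obtain ⟨C, hC⟩ := h.exists_joinedInLength_frontier hfr hfc
  obtain ⟨L, hL⟩ := hfr.exists_bound_of_continuousOn
    ((hn.continuousOn_fderiv_of_isOpen hW le_rfl).mono hfW)
  exact ⟨min R₀ ε, L.toNNReal, C,
    { isOpen := hD
      isCompact_frontier := hfr
      isNearestPointMap := hπ
      pos := lt_min hR₀ hε
      le := min_le_right _ _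
      norm_normal := fun p hp => norm_unormal (h.gradient_ne_zero hp)
      contDiffAt := fun p hp => hn.contDiffAt (hW.mem_nhds (hfW hp))
      norm_fderiv_le := fun p hp => (hL p hp).trans (Real.le_coe_toNNReal L)
      ball_subset := fun p hp s hs => hball p hp s (hs.trans (min_le_left _ _))
      eq_sub_smul := fun x hx =>
        h.eq_sub_smul_unormal hD hx (hπ.mem_frontier x hx) (hπ.dist_eq x hx)
      joinedInLength := hC }⟩

end

/-! ### The comparison of the distances -/

section

variable {d : ℕ} {D : Set (Euc d)} {π : Euc d → Euc d} {ε L : ℝ} {C : ℝ≥0} {x y ξ ζ : Euc d}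

lemma bdist_le_of_joinedInLength (h : JoinedInLength (frontier D) (fun _ v => ‖v‖) ξ ζ L) :
    bdist D ξ ζ ≤ L :=
  (bdist_eq_intrinsicDist D ξ ζ).trans_le (h.intrinsicDist_le fun _ => norm_nonneg)

lemma norm_sub_le_bdist (h : JoinedInLength (frontier D) (fun _ v => ‖v‖) ξ ζ L) :
    ‖ξ - ζ‖ ≤ bdist D ξ ζ :=
  (h.le_intrinsicDist fun _ hγ => hγ.norm_sub_le_integral).trans_eq
    (bdist_eq_intrinsicDist D ξ ζ).symm

lemma exists_infDist_frontier_le (hD : Bornology.IsBounded D) :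
    ∃ Δ, 1 ≤ Δ ∧ ∀ x ∈ D, infDist x (frontier D) ≤ Δ := by
  obtain ⟨Δ, hΔ⟩ := hD.isCompact_closure.exists_bound_of_continuousOn
    (continuous_infDist_pt (frontier D)).continuousOn
  exact ⟨max 1 Δ, le_max_left _ _, fun x hx =>
    (le_abs_self _).trans ((hΔ x (subset_closure hx)).trans (le_max_right _ _))⟩

namespace IsNearestPointMap

lemma norm_apply_sub_apply_le {Δ : ℝ} (hπ : IsNearestPointMap D π ε)
    (hΔ : ∀ x ∈ D, infDist x (frontier D) ≤ Δ) (hx : x ∈ D) (hy : y ∈ D) :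
    ‖π x - π y‖ ≤ ‖x - y‖ + 2 * √Δ * max (hfun D x) (hfun D y) := by
  have hfoot : ∀ z ∈ D, dist z (π z) ≤ √Δ * hfun D z := fun z hz =>
    calc dist z (π z) = hfun D z * hfun D z := by
          rw [hπ.dist_eq z hz, hfun, Real.mul_self_sqrt infDist_nonneg]
      _ ≤ √Δ * hfun D z :=
          mul_le_mul_of_nonneg_right (Real.sqrt_le_sqrt (hΔ z hz)) (Real.sqrt_nonneg _)
  calc ‖π x - π y‖ ≤ dist x (π x) + dist x y + dist y (π y) := by
        rw [← dist_eq_norm, dist_comm x (π x)]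
        exact dist_triangle4 _ _ _ _
    _ ≤ √Δ * max (hfun D x) (hfun D y) + ‖x - y‖ + √Δ * max (hfun D x) (hfun D y) := by
        rw [dist_eq_norm x y]
        gcongr
        · exact (hfoot x hx).trans (by gcongr; exact le_max_left _ _)
        · exact (hfoot y hy).trans (by gcongr; exact le_max_right _ _)
    _ = ‖x - y‖ + 2 * √Δ * max (hfun D x) (hfun D y) := by ring

lemma fillDist_norm_le_dH (hπ : IsNearestPointMap D π ε) (hD : IsOpen D)
    (hC : ∀ ξ ∈ frontier D, ∀ ζ ∈ frontier D,
      JoinedInLength (frontier D) (fun _ v => ‖v‖) ξ ζ (C * ‖ξ - ζ‖))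
    (hx : x ∈ D) (hy : y ∈ D) :
    fillDist ‖π x - π y‖ (hfun D x) (hfun D y) ≤ dH D π x y := by
  rw [dH_eq_fillDist]
  exact fillDist_le_fillDist (norm_nonneg _) (hπ.hfun_pos hD hx)
    (hπ.hfun_pos hD hy) (norm_sub_le_bdist (hC _ (hπ.mem_frontier x hx) _ (hπ.mem_frontier y hy)))

lemma exists_dH_le_fillDist (hπ : IsNearestPointMap D π ε) (hD : IsOpen D)
    (hDb : Bornology.IsBounded D)
    (hC : ∀ ξ ∈ frontier D, ∀ ζ ∈ frontier D,
      JoinedInLength (frontier D) (fun _ v => ‖v‖) ξ ζ (C * ‖ξ - ζ‖)) :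
    ∃ B, ∀ x ∈ D, ∀ y ∈ D, dH D π x y ≤ fillDist ‖x - y‖ (hfun D x) (hfun D y) + B := by
  obtain ⟨Δ, -, hΔ⟩ := exists_infDist_frontier_le hDb
  set Q : ℝ := C * (1 + 2 * √Δ) + 1
  refine ⟨2 * Real.log Q, fun x hx y hy => ?_⟩
  have hhx := hπ.hfun_pos hD hx
  have hjoin := hC _ (hπ.mem_frontier x hx) _ (hπ.mem_frontier y hy)
  rw [dH_eq_fillDist]
  refine fillDist_le_add_log ((norm_nonneg _).trans (norm_sub_le_bdist hjoin)) (norm_nonneg _)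
    hhx (hπ.hfun_pos hD hy) (by positivity) ?_
  set m := max (hfun D x) (hfun D y)
  have hm : 0 < m := lt_max_of_lt_left hhx
  calc bdist D (π x) (π y) + m ≤ C * (‖x - y‖ + 2 * √Δ * m) + m := by
        gcongr
        exact (bdist_le_of_joinedInLength hjoin).trans
          (mul_le_mul_of_nonneg_left (hπ.norm_apply_sub_apply_le hΔ hx hy) C.coe_nonneg)
    _ ≤ C * ((1 + 2 * √Δ) * (‖x - y‖ + m)) + (‖x - y‖ + m) := by
        gcongr
        · have : 0 ≤ √Δ * ‖x - y‖ := by positivity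
          linarith
        · exact le_add_of_nonneg_left (norm_nonneg _)
    _ = Q * (‖x - y‖ + m) := by ring

end IsNearestPointMap

end

theorem dF_additively_equivalent_dH_general
    {d : ℕ} {D : Set (Euc d)} (hD : IsC2BoundedDomain D) (hfc : IsConnected (frontier D))
    {ε : ℝ} (hε : 0 < ε) {c : ℝ} (hc : 0 < c) {π : Euc d → Euc d}
    (hπ : ∀ x ∈ D, π x ∈ frontier D ∧ dist x (π x) = Metric.infDist x (frontier D))
    (hπN : ∀ x ∈ D, Metric.infDist x (frontier D) ≤ ε →
      ∀ q ∈ frontier D, dist x q = Metric.infDist x (frontier D) → q = π x) :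
    ∃ B : ℝ, 0 ≤ B ∧ ∀ x ∈ D, ∀ y ∈ D,
      dH D π x y - B ≤ dF D π ε c x y ∧ dF D π ε c x y ≤ dH D π x y + B := by
  obtain ⟨hDo, hDc, hDb, U, u, hU, hfU, hu, hDU, hfu, hdu⟩ := hD
  have hdef : IsDefiningFunction D U u := ⟨hU, hfU, hu, hDU, hfu, hdu⟩
  have hmap : IsNearestPointMap D π ε := ⟨fun x hx => (hπ x hx).1, fun x hx => (hπ x hx).2, hπN⟩
  have hfr : IsCompact (frontier D) :=
    hDb.isCompact_closure.of_isClosed_subset isClosed_frontier frontier_subset_closure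
  obtain ⟨R, L, C, H⟩ := hdef.exists_collar hDo hfr hfc.isPreconnected hmap hε
  obtain ⟨Δ, hΔ₁, hΔ⟩ := exists_infDist_frontier_le hDb
  obtain ⟨B₁, hupper⟩ := H.exists_joinedInLength_fillDist hc.le hDc.isPreconnected hDb
  obtain ⟨B₂, hlower⟩ := hmap.exists_fillDist_sub_le_integral hDo hfr hε hc hΔ₁ hΔ
  obtain ⟨B₃, hdH⟩ := hmap.exists_dH_le_fillDist hDo hDb H.joinedInLength
  refine ⟨|B₁| + |B₂| + |B₃|, by positivity, fun x hx y hy => ⟨?_, ?_⟩⟩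
  · have hle := (hupper x hx y hy).le_intrinsicDist (hlower x y)
    rw [dF_eq_intrinsicDist]
    linarith [hdH x hx y hy, le_abs_self B₂, le_abs_self B₃, abs_nonneg B₁]
  · have hle := (hupper x hx y hy).intrinsicDist_le (Fmet_nonneg hc.le D π)
    rw [dF_eq_intrinsicDist]
    linarith [hmap.fillDist_norm_le_dH hDo H.joinedInLength hx hy, le_abs_self B₁, abs_nonneg B₂,
      abs_nonneg B₃]

end

/-- The intrinsic distance `d_F` of the filling Finsler metric is at
bounded additive distance from the hyperbolic filling distance `d_H`. -/
theorem dF_additively_equivalent_dH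
    (d : ℕ) (hd : 3 ≤ d) (D : Set (Euc d)) (hD : IsC2BoundedDomain D)
    (hfc : IsConnected (frontier D))
    (ε : ℝ) (hε0 : 0 < ε) (hε1 : ε < 1) (c : ℝ) (hc : 0 < c)
    (π : Euc d → Euc d)
    (hπ : ∀ x ∈ D, π x ∈ frontier D ∧ dist x (π x) = Metric.infDist x (frontier D))
    (hπN : ∀ x ∈ D, Metric.infDist x (frontier D) ≤ ε →
      ∀ q ∈ frontier D, dist x q = Metric.infDist x (frontier D) → q = π x) :
    ∃ B : ℝ, 0 ≤ B ∧ ∀ x ∈ D, ∀ y ∈ D,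
      dH D π x y - B ≤ dF D π ε c x y ∧ dF D π ε c x y ≤ dH D π x y + B :=
  dF_additively_equivalent_dH_general hD hfc hε0 hc hπ hπN
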